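/- arXiv:2105.08406 — 4 statements merged into one kernel-verified Lean document; each statement's English description precedes it below -/
import Mathlib

section
/- Every set of 9 points in ℝ³ in general position contains a 6-hole; that is, h⁽³⁾(6) ≤ 9. -/
/-!
Suppose nine points in general position have no 6-hole. The contradiction is a finite one about
Boolean variables attached to a good labelling of the points.

*Labelling* (`exists_normalized`). Two of the points, `0` and `1`, span an edge of the convex hull.
The half-planes bounded by the line `01` through the remaining points occur in a rotation order
about this line, and the remaining points are labelled `2, …, 8` in that order. Up to a global sign
`ε` every quadruple `0 1 i j` with `2 ≤ i < j` is then positively oriented, and, after possibly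
exchanging `0` and `1`, so is `2 3 4 5`.

*Variables* (`valuation`). For labels `a < b < c < d` there is a variable for “`a b c d` is
positively oriented”, and for a further label `p` one for “`p` lies in the tetrahedron `a b c d`”.
By the choice of the edge the latter is possible only if `p` is strictly between two of the labels
of the tetrahedron in the rotation order (`between_of_mem`).

*Premises* (`Premise`, `sat_premise`). Three kinds of clauses hold for such a configuration:
the sign patterns allowed by the three-term Grassmann–Plücker relations; if `p` lies in the
tetrahedron `a b c d` and a plane `u v w` does not separate `a, b, c, d`, then `p` is on their side
of it; and, for every six of the points, since they are not a 6-hole, the theorem of Carathéodory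
gives a tetrahedron on four of them that contains another of the nine points
(`noHole_of_labelling`).

*Refutation* (`check_cert`, `check_sound`). These clauses are jointly unsatisfiable. An explicit
resolution refutation is stored as two lists of numbers, and a checker that is proved sound is
evaluated on it by the kernel.
-/

/-- A finite set `S` of points in `ℝ^d` is in *general position* if every
`(d+1)`-element subset of `S` is affinely independent. -/
def InGeneralPosition (d : ℕ) (S : Finset (Fin d → ℝ)) : Prop :=
  ∀ T ⊆ S, T.card = d + 1 → AffineIndependent ℝ ((↑) : T → (Fin d → ℝ))

/-- A finite set of points is in *convex position* if no point of the set lies in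
the convex hull of the other points of the set. -/
def InConvexPosition (d : ℕ) (X : Finset (Fin d → ℝ)) : Prop :=
  ∀ p ∈ X, p ∉ convexHull ℝ (↑(X.erase p) : Set (Fin d → ℝ))

/-- A *k-hole* in `S` is a `k`-element subset `X ⊆ S` in convex position such that
no point of `S \ X` lies in the convex hull of `X`. -/
def IsHole (d k : ℕ) (S X : Finset (Fin d → ℝ)) : Prop :=
  X ⊆ S ∧ X.card = k ∧ InConvexPosition d X ∧
    ∀ p ∈ S, p ∉ X → p ∉ convexHull ℝ (↑X : Set (Fin d → ℝ))

/-! ### A resolution checker -/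

/-- A literal of the propositional encoding: `chi s a b c d` says that the quadruple `a b c d` (in
any order) is oriented positively if `s`, and negatively otherwise; `ins p a b c d` and `nins p a b
c d` say that point `p` lies, respectively does not lie, in the tetrahedron `a b c d`. -/
inductive Lit
  | chi (s : Bool) (a b c d : ℕ)
  | ins (p a b c d : ℕ)
  | nins (p a b c d : ℕ)

/-- A set of four labels below `9` as a bit mask below `512`. The functions of the checker are
written with `Nat.add`, `Nat.pow`, … in place of the notation so that the kernel meets its built-in
operations without unfolding instances. -/
def quadCode (a b c d : ℕ) : ℕ :=
  Nat.add (Nat.add (Nat.add (Nat.pow 2 a) (Nat.pow 2 b)) (Nat.pow 2 c)) (Nat.pow 2 d)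

/-- Whether the permutation sorting `a, b, c, d` is odd. -/
def oddPerm (a b c d : ℕ) : Bool :=
  (Nat.blt b a).xor ((Nat.blt c a).xor ((Nat.blt d a).xor
    ((Nat.blt c b).xor ((Nat.blt d b).xor (Nat.blt d c)))))

def hasDup (a b c d : ℕ) : Bool :=
  Nat.beq a b || Nat.beq a c || Nat.beq a d || Nat.beq b c || Nat.beq b d || Nat.beq c d

/-- The bit mask with the single literal “the increasing quadruple with mask `k` is positive (`s`)
or negative (`!s`)”. The mask is empty for the quadruples `0 1 i j` (`k % 4 = 3`) and `2 3 4 5` (`k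
= 60`) with the negative sign, since those are positive in a normalized configuration. -/
def chiMask (s : Bool) (k : ℕ) : ℕ :=
  bif s then Nat.pow 2 (Nat.add k 512)
  else bif Nat.beq (Nat.mod k 4) 3 || Nat.beq k 60 then 0 else Nat.pow 2 (Nat.add k 4608)

/-- Whether the tetrahedron with mask `k` has one vertex in `{2, …, p - 1}` and one that exceeds
`p`. -/
def between (p k : ℕ) : Bool :=
  Nat.ble 1 (Nat.land k (Nat.sub (Nat.pow 2 p) 4)) &&
    Nat.ble 1 (Nat.div k (Nat.pow 2 (Nat.succ p)))

/-- The bit mask with the single literal “point `p` lies in the tetrahedron with mask `k`”, or the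
empty mask if the labelling rules this out. -/
def insMask (p k : ℕ) : ℕ := bif between p k then Nat.pow 2 (Nat.add (Nat.mul 512 p) k) else 0

/-- A literal as a clause, that is, as a bit mask. Bit `512 + k` is the variable “the increasing
quadruple with mask `k` is positive”, bit `512 * p + k` with `3 ≤ p ≤ 7` the variable “`p` lies in
the tetrahedron with mask `k`”, and adding `4096` negates a variable. The bits below `512` do not
stand for any literal. Literals that are false in every normalized configuration have an empty
mask. -/
def Lit.mask : Lit → ℕ
  | .chi s a b c d =>
    bif hasDup a b c d then 0 else chiMask (s.xor (oddPerm a b c d)) (quadCode a b c d)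
  | .ins p a b c d => insMask p (quadCode a b c d)
  | .nins p a b c d => Nat.pow 2 (Nat.add (Nat.add (Nat.mul 512 p) (quadCode a b c d)) 4096)

def clauseMask : List Lit → ℕ
  | [] => 0
  | l :: ls => Nat.lor l.mask (clauseMask ls)

/-- The premises that a refutation may use. `gp` forbids, in the Grassmann–Plücker relation of
`det4_plucker`, that the three signed products all have the sign `s`, where `x, y, z` are the signs
of their first factors. `sep` says that if `p` lies in the tetrahedron `a b c d`, none of whose
vertices is on the side `!s` of the plane `u v w`, then `p` is on the side `s`. `hole` says that the
six points with mask `m` are not a 6-hole. -/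
inductive Premise
  | gp (a b c d e f : ℕ) (x y z s : Bool)
  | sep (p a b c d u v w : ℕ) (s : Bool)
  | hole (m : ℕ)

/-- The labels with mask `m`, in increasing order. -/
def members (m : ℕ) : List ℕ := (List.range 9).filter fun i => m.testBit i

def holeLits (p : ℕ) : List ℕ → List Lit
  | [a, b, c, d] => [.ins p a b c d]
  | _ => []

/-- The clause expressed by a premise. -/
def Premise.lits : Premise → List Lit
  | .gp a b c d e f x y z s =>
    [.chi (!x) a b c d, .chi (x.xor s) a b e f, .chi (!y) a b c e, .chi (!(y.xor s)) a b d f,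
      .chi (!z) a b c f, .chi (z.xor s) a b d e]
  | .sep p a b c d u v w s =>
    [.nins p a b c d, .chi (!s) u v w a, .chi (!s) u v w b, .chi (!s) u v w c,
      .chi (!s) u v w d, .chi s u v w p]
  | .hole m =>
    ((members m).sublistsLen 4).flatMap fun l =>
      (List.range 9).flatMap fun p => bif l.elem p then [] else holeLits p l

/-- Whether the entries of a list are distinct labels below `9`. -/
def distinct9 : List ℕ → Bool
  | [] => true
  | a :: l => Nat.blt a 9 && !(l.elem a) && distinct9 l

/-- The side conditions under which a premise is valid. -/
def Premise.ok : Premise → Bool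
  | .gp a b c d e f _ _ _ _ => distinct9 [a, b, c, d, e, f]
  | .sep p a b c d u v w _ =>
    Nat.blt a b && Nat.blt b c && Nat.blt c d && Nat.blt d 9 && Nat.ble 3 p && Nat.ble p 7 &&
      distinct9 [u, v, w, p]
  | .hole m => Nat.beq (members m).length 6

/-- The `i`-th hexadecimal digit of `x`, counted from the least significant one. -/
def digit (x i : ℕ) : ℕ := Nat.mod (Nat.div x (Nat.pow 16 i)) 16

/-- The premise encoded by `x`. The lowest hexadecimal digit gives the kind, the further digits, in
increasing significance, the arguments; for `hole` the mask is the remaining number. -/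
def decodePremise (x : ℕ) : Premise :=
  bif Nat.beq (digit x 0) 0 then
    .gp (digit x 1) (digit x 2) (digit x 3) (digit x 4) (digit x 5) (digit x 6)
      ((digit x 7).testBit 0) ((digit x 7).testBit 1) ((digit x 7).testBit 2)
      ((digit x 7).testBit 3)
  else bif Nat.beq (digit x 0) 1 then
    .sep (digit x 1) (digit x 2) (digit x 3) (digit x 4) (digit x 5) (digit x 6) (digit x 7)
      (digit x 8) (Nat.beq (digit x 9) 1)
  else .hole (x / 16)

/-- A binary tree storing clauses under natural numbers. The root has index `0`; the left subtree
holds the indices `2 * i + 1` and the right one the indices `2 * i + 2`, where `i` is the index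
within the subtree. -/
inductive Trie
  | leaf
  | node (v : ℕ) (l r : Trie)

/-- The value `k x`, written so that the kernel evaluates `x` to a literal before it enters `k`. -/
def force (x : ℕ) (k : ℕ → Bool) : Bool :=
  match x with
  | 0 => k 0
  | n + 1 => k (Nat.succ n)

/-- Passes the clause with index `i` to the continuation `k`. It is `false` where the path to `i`
leaves the tree. -/
def Trie.get : Trie → ℕ → (ℕ → Bool) → Bool
  | .leaf, _, _ => false
  | .node v l r, i, k =>
    match i with
    | 0 => k v
    | j + 1 => bif Nat.beq (Nat.mod j 2) 0 then l.get (Nat.div j 2) k else r.get (Nat.div j 2) k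

/-- Stores the clause `c` with index `i` and passes the new tree to the continuation `k`. -/
def Trie.insert : Trie → ℕ → ℕ → (Trie → Bool) → Bool
  | .leaf, _, c, k => k (.node c .leaf .leaf)
  | .node v l r, i, c, k =>
    match i with
    | 0 => k (.node c l r)
    | j + 1 =>
      bif Nat.beq (Nat.mod j 2) 0 then l.insert (Nat.div j 2) c fun lnew => k (.node v lnew r)
      else r.insert (Nat.div j 2) c fun rnew => k (.node v l rnew)

/-- Changes the low 32 bits of the mask `c` in a way that depends on `r`. These bits do not stand
for literals, so this has no logical meaning. It spreads the masks out under the hash that the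
kernel computes for a number literal, which reads the lowest 64 bits only: without it the clauses
would share a few hash values and the evaluation caches would degenerate. -/
def salt (r c : ℕ) : ℕ := Nat.xor c (Nat.mod r 4294967296)

/-- The negations of the literals in the mask `c`; bits from `8192` on of the result are not
literals. -/
def flipMask (c : ℕ) : ℕ :=
  Nat.lor (Nat.div c (Nat.pow 2 4096)) (Nat.mul c (Nat.pow 2 4096))

/-- The resolvent of the clauses `c` and `d`, salted by `r` and passed to `k`. It fails if more than
one bit of `c` is negated in `d`; if none is, the result is a weakening of both clauses. -/
def resolve (r c d : ℕ) (k : ℕ → Bool) : Bool :=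
  force (Nat.land c (flipMask d)) fun i =>
    bif Nat.beq (Nat.land i (Nat.pred i)) 0 then
      force (salt r (Nat.lor (Nat.xor c i) (Nat.xor d (Nat.land d (flipMask i))))) k
    else false

/-- Resolves the clause `c` in turn with clauses of the tree `t`. The base-`4096` digits of `x`,
least significant first, are the indices of these clauses plus one; `n` bounds their number. -/
def chain (t : Trie) : ℕ → ℕ → ℕ → (ℕ → Bool) → Bool
  | 0, _, _, _ => false
  | n + 1, x, c, k =>
    match x with
    | 0 => k c
    | y + 1 => t.get (Nat.mod y 4096) fun d =>
      resolve y c d fun cnew => chain t n (Nat.div y 4096) cnew k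

/-- Stores the clause `c` with index `n` and passes on the next index and the new tree. -/
def addClause (c n : ℕ) (t : Trie) (k : ℕ → Trie → Bool) : Bool :=
  force (salt (Nat.mul n 2654435761) c) fun cnew =>
    t.insert n cnew fun tnew => force (Nat.succ n) fun nnew => k nnew tnew

/-- Stores the clauses of the given premises, after checking their side conditions. -/
def addPremises : List ℕ → ℕ → Trie → (ℕ → Trie → Bool) → Bool
  | [], n, t, k => k n t
  | x :: xs, n, t, k =>
    bif (decodePremise x).ok then
      addClause (clauseMask (decodePremise x).lits) n t fun nnew tnew => addPremises xs nnew tnew k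
    else false

/-- Derives the clauses with the given codes one after the other and stores them, until the empty
clause occurs. The base-`4096` digits of a code, least significant first, are indices of known
clauses plus one; the first clause is resolved in turn with the others. A clause is empty if its
mask has only salted bits. -/
def addDerivations : List ℕ → ℕ → Trie → Bool
  | [], _, _ => false
  | x :: xs, n, t =>
    match x with
    | 0 => false
    | y + 1 =>
      t.get (Nat.mod y 4096) fun c => chain t 200 (Nat.div y 4096) c fun cnew =>
        bif Nat.beq (Nat.div cnew 4294967296) 0 then true
        else addClause cnew n t fun nnew tnew => addDerivations xs nnew tnew

/-- Whether `ls` encodes a resolution refutation of the premises encoded by `axs`. -/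
def check (axs ls : List ℕ) : Bool :=
  addPremises axs 0 .leaf fun n t => addDerivations ls n t

/-! ### Soundness of the checker -/

/-- The literal with bit `k` is true under the valuation `σ`. -/
def litTrue (σ : ℕ → Prop) (k : ℕ) : Prop :=
  (k < 4096 ∧ σ k) ∨ (4096 ≤ k ∧ k < 8192 ∧ ¬ σ (k - 4096))

/-- The clause with mask `c` is true under the valuation `σ`. -/
def Sat (σ : ℕ → Prop) (c : ℕ) : Prop := ∃ k, c.testBit k = true ∧ litTrue σ k

theorem force_eq (x : ℕ) (k : ℕ → Bool) : force x k = k x := by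
  cases x <;> rfl

theorem not_litTrue_of_lt {σ : ℕ → Prop} (hσ : ∀ k < 512, ¬ σ k) {k : ℕ} (hk : k < 512) :
    ¬ litTrue σ k := by
  rintro (h | h)
  · exact hσ k hk h.2
  · omega

theorem Sat.salt {σ : ℕ → Prop} (hσ : ∀ k < 512, ¬ σ k) {c : ℕ} (h : Sat σ c) (r : ℕ) :
    Sat σ (salt r c) := by
  obtain ⟨k, hk, hl⟩ := h
  refine ⟨k, ?_, hl⟩
  have hk' : ¬ k < 512 := fun hlt => not_litTrue_of_lt hσ hlt hl
  have hr : (r % 4294967296).testBit k = false := by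
    apply Nat.testBit_lt_two_pow
    calc r % 4294967296 < 2 ^ 32 := Nat.mod_lt _ (by norm_num)
      _ ≤ 2 ^ k := Nat.pow_le_pow_right (by norm_num) (by omega)
  change (c ^^^ (r % 4294967296)).testBit k = true
  rw [Nat.testBit_xor, hk, hr]
  rfl

theorem not_sat_of_div_eq_zero {σ : ℕ → Prop} (hσ : ∀ k < 512, ¬ σ k) {c : ℕ}
    (hc : Nat.div c 4294967296 = 0) : ¬ Sat σ c := by
  rintro ⟨k, hk, hl⟩
  have hk' : ¬ k < 512 := fun hlt => not_litTrue_of_lt hσ hlt hl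
  have hc' : c < 2 ^ 32 := by
    have : c / 4294967296 = 0 := hc
    omega
  have : c.testBit k = false := Nat.testBit_lt_two_pow
    (hc'.trans_le (Nat.pow_le_pow_right (by norm_num) (by omega)))
  simp [this] at hk

set_option exponentiation.threshold 5000 in
theorem testBit_flipMask_two_pow {i k : ℕ} (h : (flipMask (2 ^ i)).testBit k = true) :
    k + 4096 = i ∨ k = i + 4096 := by
  change ((2 ^ i / 2 ^ 4096) ||| (2 ^ i * 2 ^ 4096)).testBit k = true at h
  rw [Nat.testBit_or, Nat.testBit_div_two_pow, ← pow_add, Nat.testBit_two_pow,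
    Nat.testBit_two_pow] at h
  simp only [Bool.or_eq_true, decide_eq_true_eq] at h
  omega

theorem not_litTrue_of_opposite {σ : ℕ → Prop} {i k : ℕ} (h : k + 4096 = i ∨ k = i + 4096)
    (hi : litTrue σ i) (hk : litTrue σ k) : False := by
  rcases hi with ⟨h1, h2⟩ | ⟨h1, h2, h3⟩ <;> rcases hk with ⟨h4, h5⟩ | ⟨h4, h5, h6⟩
  · omega
  · exact h6 (by rwa [show k - 4096 = i by omega])
  · exact h3 (by rwa [show i - 4096 = k by omega])
  · omega

theorem resolve_sound {σ : ℕ → Prop} (hσ : ∀ k < 512, ¬ σ k) {r c d : ℕ} {k : ℕ → Bool}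
    (hc : Sat σ c) (hd : Sat σ d) (h : resolve r c d k = true) :
    ∃ e, Sat σ e ∧ k e = true := by
  unfold resolve at h
  rw [force_eq] at h
  set i := Nat.land c (flipMask d) with hi
  cases hb : Nat.beq (Nat.land i (Nat.pred i)) 0 with
  | false => simp only [hb, cond_false, Bool.false_eq_true] at h
  | true =>
    simp only [hb, cond_true] at h
    rw [force_eq] at h
    refine ⟨_, Sat.salt hσ ?_ r, h⟩
    have hi0 : i &&& (i - 1) = 0 := Nat.eq_of_beq_eq_true hb
    obtain ⟨m, hm, hml⟩ := hc
    obtain ⟨n, hn, hnl⟩ := hd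
    by_cases hmi : i.testBit m = true
    · by_cases hni : (Nat.land d (flipMask i)).testBit n = true
      · exfalso
        have hne : i ≠ 0 := by
          rintro h0
          simp [h0] at hmi
        obtain ⟨j, hj⟩ := (Nat.ne_zero_and_sub_one_eq_zero_iff_isPowerOfTwo).1 ⟨hne, hi0⟩
        rw [hj, Nat.testBit_two_pow] at hmi
        have hjm : j = m := by simpa using hmi
        have hf : (flipMask i).testBit n = true := by
          have : (d &&& flipMask i).testBit n = true := hni
          rw [Nat.testBit_and, Bool.and_eq_true] at this
          exact this.2
        rw [hj, hjm] at hf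
        exact not_litTrue_of_opposite (testBit_flipMask_two_pow hf) hml hnl
      · refine ⟨n, ?_, hnl⟩
        change ((c ^^^ i) ||| (d ^^^ (Nat.land d (flipMask i)))).testBit n = true
        rw [Nat.testBit_or, Nat.testBit_xor d, hn, Bool.eq_false_of_not_eq_true hni]
        simp
    · refine ⟨m, ?_, hml⟩
      change ((c ^^^ i) ||| (d ^^^ (Nat.land d (flipMask i)))).testBit m = true
      rw [Nat.testBit_or, Nat.testBit_xor c, hm, Bool.eq_false_of_not_eq_true hmi]
      simp

/-- All clauses stored in a tree satisfy `P`. -/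
def Trie.All (P : ℕ → Prop) : Trie → Prop
  | .leaf => True
  | .node v l r => P v ∧ l.All P ∧ r.All P

theorem Trie.get_sound {P : ℕ → Prop} {k : ℕ → Bool} : ∀ {t : Trie} {i : ℕ}, t.All P →
    t.get i k = true → ∃ v, P v ∧ k v = true
  | .leaf, _, _, h => by simp [Trie.get] at h
  | .node v l r, 0, ht, h => ⟨v, ht.1, h⟩
  | .node v l r, j + 1, ht, h => by
    unfold Trie.get at h
    cases hb : Nat.beq (Nat.mod j 2) 0 with
    | true => exact Trie.get_sound ht.2.1 (by simpa [hb] using h)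
    | false => exact Trie.get_sound ht.2.2 (by simpa [hb] using h)

theorem Trie.insert_sound {P : ℕ → Prop} {c : ℕ} (hc : P c) : ∀ {t : Trie} {i : ℕ}
    {k : Trie → Bool}, t.All P → t.insert i c k = true → ∃ tnew : Trie, tnew.All P ∧ k tnew = true
  | .leaf, _, k, _, h => ⟨.node c .leaf .leaf, ⟨hc, trivial, trivial⟩, by
      simpa [Trie.insert] using h⟩
  | .node v l r, 0, k, ht, h => ⟨.node c l r, ⟨hc, ht.2⟩, h⟩
  | .node v l r, j + 1, k, ht, h => by
    unfold Trie.insert at h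
    cases hb : Nat.beq (Nat.mod j 2) 0 with
    | true =>
      obtain ⟨lnew, hl', hk⟩ := Trie.insert_sound hc ht.2.1
        (show l.insert (Nat.div j 2) c (fun lnew => k (.node v lnew r)) = true by
          simpa [hb] using h)
      exact ⟨.node v lnew r, ⟨ht.1, hl', ht.2.2⟩, hk⟩
    | false =>
      obtain ⟨rnew, hr', hk⟩ := Trie.insert_sound hc ht.2.2
        (show r.insert (Nat.div j 2) c (fun rnew => k (.node v l rnew)) = true by
          simpa [hb] using h)
      exact ⟨.node v l rnew, ⟨ht.1, ht.2.1, hr'⟩, hk⟩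

theorem chain_sound {σ : ℕ → Prop} (hσ : ∀ k < 512, ¬ σ k) {t : Trie} (ht : t.All (Sat σ))
    {k : ℕ → Bool} : ∀ {n x c : ℕ}, Sat σ c → chain t n x c k = true →
    ∃ e, Sat σ e ∧ k e = true
  | 0, _, _, _, h => by simp [chain] at h
  | n + 1, 0, c, hc, h => ⟨c, hc, h⟩
  | n + 1, y + 1, c, hc, h => by
    unfold chain at h
    obtain ⟨d, hd, h⟩ := Trie.get_sound ht h
    obtain ⟨e, he, h⟩ := resolve_sound hσ hc hd h
    exact chain_sound hσ ht he h

theorem addClause_sound {σ : ℕ → Prop} (hσ : ∀ k < 512, ¬ σ k) {c n : ℕ} {t : Trie}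
    {k : ℕ → Trie → Bool} (hc : Sat σ c) (ht : t.All (Sat σ)) (h : addClause c n t k = true) :
    ∃ (nnew : ℕ) (tnew : Trie), tnew.All (Sat σ) ∧ k nnew tnew = true := by
  unfold addClause at h
  rw [force_eq] at h
  obtain ⟨tnew, ht', h⟩ := Trie.insert_sound (Sat.salt hσ hc _) ht h
  rw [force_eq] at h
  exact ⟨_, tnew, ht', h⟩

theorem addPremises_sound {σ : ℕ → Prop} (hσ : ∀ k < 512, ¬ σ k)
    (hax : ∀ A : Premise, A.ok = true → Sat σ (clauseMask A.lits)) {k : ℕ → Trie → Bool} :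
    ∀ {xs : List ℕ} {n : ℕ} {t : Trie}, t.All (Sat σ) → addPremises xs n t k = true →
    ∃ (nnew : ℕ) (tnew : Trie), tnew.All (Sat σ) ∧ k nnew tnew = true
  | [], n, t, ht, h => ⟨n, t, ht, h⟩
  | x :: xs, n, t, ht, h => by
    unfold addPremises at h
    cases hb : (decodePremise x).ok with
    | false => simp [hb] at h
    | true =>
      simp only [hb, cond_true] at h
      obtain ⟨nnew, tnew, ht', h⟩ := addClause_sound hσ (hax _ hb) ht h
      exact addPremises_sound hσ hax ht' h

theorem addDerivations_sound {σ : ℕ → Prop} (hσ : ∀ k < 512, ¬ σ k) :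
    ∀ {xs : List ℕ} {n : ℕ} {t : Trie}, t.All (Sat σ) → addDerivations xs n t = true → False
  | [], n, t, _, h => by simp [addDerivations] at h
  | 0 :: xs, n, t, _, h => by simp [addDerivations] at h
  | (y + 1) :: xs, n, t, ht, h => by
    unfold addDerivations at h
    obtain ⟨c, hc, h⟩ := Trie.get_sound ht h
    obtain ⟨e, he, h⟩ := chain_sound hσ ht hc h
    cases hb : Nat.beq (Nat.div e 4294967296) 0 with
    | true => exact not_sat_of_div_eq_zero hσ (Nat.eq_of_beq_eq_true hb) he
    | false =>
      simp only [hb, cond_false] at h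
      obtain ⟨nnew, tnew, ht', h⟩ := addClause_sound hσ he ht h
      exact addDerivations_sound hσ ht' h

/-- If the checker accepts, then no valuation in which the unused variables are false satisfies all
premises. -/
theorem check_sound {axs ls : List ℕ} (h : check axs ls = true) {σ : ℕ → Prop}
    (hσ : ∀ k < 512, ¬ σ k) (hax : ∀ A : Premise, A.ok = true → Sat σ (clauseMask A.lits)) :
    False := by
  obtain ⟨n, t, ht, h⟩ := addPremises_sound hσ hax (t := .leaf) trivial h
  exact addDerivations_sound hσ ht h

theorem sat_clauseMask {σ : ℕ → Prop} {l : Lit} (hl : Sat σ l.mask) :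
    ∀ {ls : List Lit}, l ∈ ls → Sat σ (clauseMask ls)
  | a :: ls, h => by
    change Sat σ (a.mask ||| clauseMask ls)
    rcases List.mem_cons.1 h with rfl | h
    · obtain ⟨k, hk, hs⟩ := hl
      exact ⟨k, by simp [Nat.testBit_or, hk], hs⟩
    · obtain ⟨k, hk, hs⟩ := sat_clauseMask hl h
      exact ⟨k, by simp [Nat.testBit_or, hk], hs⟩

/-! ### Normalized configurations and their Boolean valuation -/

/-- The determinant of `q - p, r - p, s - p`, whose sign is the orientation of `p q r s`. -/
def det4 (p q r s : Fin 3 → ℝ) : ℝ :=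
  (q 0 - p 0) * ((r 1 - p 1) * (s 2 - p 2) - (r 2 - p 2) * (s 1 - p 1)) -
    (q 1 - p 1) * ((r 0 - p 0) * (s 2 - p 2) - (r 2 - p 2) * (s 0 - p 0)) +
    (q 2 - p 2) * ((r 0 - p 0) * (s 1 - p 1) - (r 1 - p 1) * (s 0 - p 0))

def quadSet (pt : ℕ → Fin 3 → ℝ) (a b c d : ℕ) : Set (Fin 3 → ℝ) := {pt a, pt b, pt c, pt d}

/-- The points `pt 0, …, pt 8` are in general position and without a 6-hole, and are labelled in
rotation order around the hull edge from `pt 0` to `pt 1`. All signs are taken relative to `ε`,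
which allows for one global reflection. -/
structure Normalized (pt : ℕ → Fin 3 → ℝ) (ε : ℝ) : Prop where
  eps_ne : ε ≠ 0
  det_ne : ∀ a < 9, ∀ b < 9, ∀ c < 9, ∀ d < 9, a ≠ b → a ≠ c → a ≠ d → b ≠ c → b ≠ d → c ≠ d →
    det4 (pt a) (pt b) (pt c) (pt d) ≠ 0
  edge : ∀ i j, 2 ≤ i → i < j → j < 9 → 0 < ε * det4 (pt 0) (pt 1) (pt i) (pt j)
  base : 0 < ε * det4 (pt 2) (pt 3) (pt 4) (pt 5)
  noHole : ∀ m, (members m).length = 6 → ∃ l ∈ (members m).sublistsLen 4, ∃ p < 9, p ∉ l ∧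
    pt p ∈ convexHull ℝ (Set.image pt {i | i ∈ l})

/-- The determinant of four points, relative to the reference orientation `ε`. -/
def orient (pt : ℕ → Fin 3 → ℝ) (ε : ℝ) (a b c d : ℕ) : ℝ :=
  ε * det4 (pt a) (pt b) (pt c) (pt d)

/-- The number `x` is positive if `s`, and negative otherwise. -/
def hasSign (s : Bool) (x : ℝ) : Prop := bif s then 0 < x else x < 0

theorem hasSign_or {x : ℝ} (hx : x ≠ 0) (s : Bool) : hasSign s x ∨ hasSign (!s) x := by
  cases s <;> simp only [hasSign, Bool.not_true, Bool.not_false, cond_true, cond_false]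
  · exact lt_or_gt_of_ne hx
  · exact (lt_or_gt_of_ne hx).symm

theorem hasSign_neg {x : ℝ} {s : Bool} : hasSign (!s) (-x) ↔ hasSign s x := by
  cases s <;> simp [hasSign]

theorem hasSign.ne_zero {x : ℝ} {s : Bool} (h : hasSign s x) : x ≠ 0 := by
  cases s
  · exact ne_of_lt h
  · exact ne_of_gt h

/-- The truth values of the variables of `Lit.mask` in a given configuration. -/
def valuation (pt : ℕ → Fin 3 → ℝ) (ε : ℝ) (k : ℕ) : Prop :=
  512 ≤ k ∧
    match members (k % 512) with
    | [a, b, c, d] =>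
      if k < 1024 then 0 < orient pt ε a b c d
      else pt (k / 512) ∈ convexHull ℝ (quadSet pt a b c d)
    | _ => False

theorem quad_table : ∀ d ∈ List.range 9, ∀ c ∈ List.range d, ∀ b ∈ List.range c,
    ∀ a ∈ List.range b, members (quadCode a b c d) = [a, b, c, d] ∧ quadCode a b c d < 512 ∧
    (quadCode a b c d % 4 = 3 → a = 0 ∧ b = 1) ∧
    (quadCode a b c d = 60 → a = 2 ∧ b = 3 ∧ c = 4 ∧ d = 5) := by
  decide +kernel

/-- If the combinatorial condition `between` fails, then all vertices of the tetrahedron other than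
`0` and `1` come on one side of `p` in the rotation order. -/
theorem between_table : ∀ d ∈ List.range 9, ∀ c ∈ List.range d, ∀ b ∈ List.range c,
    ∀ a ∈ List.range b, ∀ p ∈ List.range 9, p ∉ [a, b, c, d] →
      (between p (quadCode a b c d) = true ∧ 3 ≤ p ∧ p < 8) ∨
      (between p (quadCode a b c d) = false ∧
        ((∀ t ∈ [a, b, c, d], t < 2 ∨ p < t) ∨ (∀ t ∈ [a, b, c, d], t < p))) := by
  decide +kernel

theorem quad_facts {a b c d : ℕ} (hab : a < b) (hbc : b < c) (hcd : c < d) (hd : d < 9) :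
    members (quadCode a b c d) = [a, b, c, d] ∧ quadCode a b c d < 512 ∧
    (quadCode a b c d % 4 = 3 → a = 0 ∧ b = 1) ∧
    (quadCode a b c d = 60 → a = 2 ∧ b = 3 ∧ c = 4 ∧ d = 5) :=
  quad_table d (List.mem_range.2 hd) c (List.mem_range.2 hcd) b (List.mem_range.2 hbc) a
    (List.mem_range.2 hab)

theorem convexHull_quad {w x y z q : Fin 3 → ℝ} (h : q ∈ convexHull ℝ {w, x, y, z}) :
    ∃ α β γ δ : ℝ, 0 ≤ α ∧ 0 ≤ β ∧ 0 ≤ γ ∧ 0 ≤ δ ∧ α + β + γ + δ = 1 ∧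
      ∀ i, q i = α * w i + β * x i + γ * y i + δ * z i := by
  refine convexHull_min (t := {q | ∃ α β γ δ : ℝ, 0 ≤ α ∧ 0 ≤ β ∧ 0 ≤ γ ∧ 0 ≤ δ ∧
    α + β + γ + δ = 1 ∧ ∀ i, q i = α * w i + β * x i + γ * y i + δ * z i}) ?_ ?_ h
  · rintro _ (rfl | rfl | rfl | rfl)
    · exact ⟨1, 0, 0, 0, by norm_num⟩
    · exact ⟨0, 1, 0, 0, by norm_num⟩
    · exact ⟨0, 0, 1, 0, by norm_num⟩
    · exact ⟨0, 0, 0, 1, by norm_num⟩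
  · rintro u ⟨α, β, γ, δ, h1, h2, h3, h4, h5, h6⟩ v ⟨α', β', γ', δ', h1', h2', h3', h4', h5', h6'⟩
      s t hs ht hst
    refine ⟨s * α + t * α', s * β + t * β', s * γ + t * γ', s * δ + t * δ', by positivity,
      by positivity, by positivity, by positivity, ?_, fun i => ?_⟩
    · linear_combination s * h5 + t * h5' + hst
    · simp only [Pi.add_apply, Pi.smul_apply, smul_eq_mul, h6 i, h6' i]
      ring

theorem det4_combination {u v p w x y z q : Fin 3 → ℝ} {α β γ δ : ℝ} (h1 : α + β + γ + δ = 1)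
    (h : ∀ i, q i = α * w i + β * x i + γ * y i + δ * z i) :
    det4 u v p q = α * det4 u v p w + β * det4 u v p x + γ * det4 u v p y + δ * det4 u v p z := by
  obtain rfl : δ = 1 - α - β - γ := by linarith
  simp only [det4, h]
  ring

theorem det4_swap12 (p q r s : Fin 3 → ℝ) : det4 p q r s = -det4 q p r s := by
  simp only [det4]; ring

theorem det4_swap23 (p q r s : Fin 3 → ℝ) : det4 p q r s = -det4 p r q s := by
  simp only [det4]; ring

theorem det4_swap34 (p q r s : Fin 3 → ℝ) : det4 p q r s = -det4 p q s r := by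
  simp only [det4]; ring

/-- The three-term Grassmann–Plücker relation. -/
theorem det4_plucker (a b c d e f : Fin 3 → ℝ) :
    det4 a b c d * det4 a b e f - det4 a b c e * det4 a b d f +
      det4 a b c f * det4 a b d e = 0 := by
  simp only [det4]; ring

theorem det4_self34 (p q r : Fin 3 → ℝ) : det4 p q r r = 0 := by
  simp only [det4]; ring

theorem det4_self24 (p q r : Fin 3 → ℝ) : det4 p q r q = 0 := by
  simp only [det4]; ring

theorem det4_self14 (p q r : Fin 3 → ℝ) : det4 p q r p = 0 := by
  simp only [det4]; ring

section

variable {pt : ℕ → Fin 3 → ℝ} {ε : ℝ}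

theorem orient_swap12 (a b c d : ℕ) : orient pt ε a b c d = -orient pt ε b a c d := by
  rw [orient, det4_swap12]; simp [orient]

theorem orient_swap23 (a b c d : ℕ) : orient pt ε a b c d = -orient pt ε a c b d := by
  rw [orient, det4_swap23]; simp [orient]

theorem orient_swap34 (a b c d : ℕ) : orient pt ε a b c d = -orient pt ε a b d c := by
  rw [orient, det4_swap34]; simp [orient]

theorem Normalized.orient_ne (N : Normalized pt ε) {a b c d : ℕ} (ha : a < 9) (hb : b < 9)
    (hc : c < 9) (hd : d < 9) (hab : a ≠ b) (hac : a ≠ c) (had : a ≠ d) (hbc : b ≠ c)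
    (hbd : b ≠ d) (hcd : c ≠ d) : orient pt ε a b c d ≠ 0 :=
  mul_ne_zero N.eps_ne (N.det_ne a ha b hb c hc d hd hab hac had hbc hbd hcd)

theorem valuation_lt (k : ℕ) (hk : k < 512) : ¬ valuation pt ε k := fun h => by
  have := h.1
  omega

theorem valuation_chi {a b c d : ℕ} (hab : a < b) (hbc : b < c) (hcd : c < d) (hd : d < 9) :
    valuation pt ε (quadCode a b c d + 512) ↔ 0 < orient pt ε a b c d := by
  obtain ⟨h1, h2, -⟩ := quad_facts hab hbc hcd hd
  have h3 : (quadCode a b c d + 512) % 512 = quadCode a b c d := by omega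
  have h4 : quadCode a b c d + 512 < 1024 := by omega
  simp [valuation, h3, h1, h4]

theorem valuation_ins {p a b c d : ℕ} (hab : a < b) (hbc : b < c) (hcd : c < d) (hd : d < 9)
    (hp : 3 ≤ p) :
    valuation pt ε (512 * p + quadCode a b c d) ↔
      pt p ∈ convexHull ℝ (quadSet pt a b c d) := by
  obtain ⟨h1, h2, -⟩ := quad_facts hab hbc hcd hd
  have h3 : (512 * p + quadCode a b c d) % 512 = quadCode a b c d := by omega
  have h4 : ¬ 512 * p + quadCode a b c d < 1024 := by omega
  have h5 : (512 * p + quadCode a b c d) / 512 = p := by omega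
  have h6 : 512 ≤ 512 * p + quadCode a b c d := by omega
  simp only [valuation, h3, h1, h4, h5, h6, if_false, true_and]

theorem sat_two_pow {σ : ℕ → Prop} {k : ℕ} (h : litTrue σ k) : Sat σ (2 ^ k) :=
  ⟨k, by simp, h⟩

theorem chiMask_true (k : ℕ) : chiMask true k = 2 ^ (k + 512) := rfl

theorem chiMask_false {k : ℕ} (h3 : k % 4 ≠ 3) (h60 : k ≠ 60) :
    chiMask false k = 2 ^ (k + 4608) := by
  have h3' : Nat.beq (Nat.mod k 4) 3 = false :=
    Bool.eq_false_of_not_eq_true fun hb => h3 (Nat.eq_of_beq_eq_true hb)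
  have h60' : Nat.beq k 60 = false :=
    Bool.eq_false_of_not_eq_true fun hb => h60 (Nat.eq_of_beq_eq_true hb)
  simp only [chiMask, h3', h60', Bool.or_false, cond_false, Nat.add_eq, Nat.pow_eq]

theorem sat_chiMask (N : Normalized pt ε) {a b c d : ℕ} (hab : a < b) (hbc : b < c)
    (hcd : c < d) (hd : d < 9) {s : Bool} (h : hasSign s (orient pt ε a b c d)) :
    Sat (valuation pt ε) (chiMask s (quadCode a b c d)) := by
  obtain ⟨h1, h2, h3, h4⟩ := quad_facts hab hbc hcd hd
  have hval := valuation_chi (pt := pt) (ε := ε) hab hbc hcd hd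
  cases s with
  | true =>
    rw [chiMask_true]
    exact sat_two_pow (.inl ⟨by omega, hval.2 h⟩)
  | false =>
    have h' : orient pt ε a b c d < 0 := h
    rw [chiMask_false]
    · refine sat_two_pow (.inr ⟨by omega, by omega, ?_⟩)
      rw [show quadCode a b c d + 4608 - 4096 = quadCode a b c d + 512 by omega, hval]
      exact not_lt_of_gt h'
    · intro hb
      obtain ⟨rfl, rfl⟩ := h3 hb
      exact lt_asymm h' (N.edge c d hbc hcd hd)
    · intro hb
      obtain ⟨rfl, rfl, rfl, rfl⟩ := h4 hb
      exact lt_asymm h' N.base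

/-- The mask of an orientation literal is satisfied whenever the literal holds. -/
def ChiSound (pt : ℕ → Fin 3 → ℝ) (ε : ℝ) (a b c d : ℕ) : Prop :=
  ∀ s, hasSign s (orient pt ε a b c d) → Sat (valuation pt ε) (Lit.chi s a b c d).mask

theorem blt_comm {a b : ℕ} (h : a ≠ b) : Nat.blt a b = !Nat.blt b a := by
  rw [Bool.eq_iff_iff]
  simp only [Nat.blt_eq, Bool.not_eq_true', ← Bool.not_eq_true]
  omega

theorem ChiSound.swap12 {a b c d : ℕ} (hab : a ≠ b) (h : ChiSound pt ε b a c d) :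
    ChiSound pt ε a b c d := fun s hs => by
  have hs' := h (!s) (by rw [orient_swap12]; exact hasSign_neg.2 hs)
  have h1 : hasDup a b c d = hasDup b a c d := by
    rw [Bool.eq_iff_iff]
    simp only [hasDup, Bool.or_eq_true, Nat.beq_eq]
    tauto
  have h2 : oddPerm a b c d = !oddPerm b a c d := by
    rw [oddPerm, oddPerm, blt_comm hab.symm]
    grind
  have h3 : quadCode a b c d = quadCode b a c d := by
    simp only [quadCode, Nat.add_eq]
    omega
  simpa only [Lit.mask, h1, h2, h3, Bool.not_xor, Bool.xor_not] using hs'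

theorem ChiSound.swap23 {a b c d : ℕ} (hbc : b ≠ c) (h : ChiSound pt ε a c b d) :
    ChiSound pt ε a b c d := fun s hs => by
  have hs' := h (!s) (by rw [orient_swap23]; exact hasSign_neg.2 hs)
  have h1 : hasDup a b c d = hasDup a c b d := by
    rw [Bool.eq_iff_iff]
    simp only [hasDup, Bool.or_eq_true, Nat.beq_eq]
    tauto
  have h2 : oddPerm a b c d = !oddPerm a c b d := by
    rw [oddPerm, oddPerm, blt_comm hbc.symm]
    grind
  have h3 : quadCode a b c d = quadCode a c b d := by
    simp only [quadCode, Nat.add_eq]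
    omega
  simpa only [Lit.mask, h1, h2, h3, Bool.not_xor, Bool.xor_not] using hs'

theorem ChiSound.swap34 {a b c d : ℕ} (hcd : c ≠ d) (h : ChiSound pt ε a b d c) :
    ChiSound pt ε a b c d := fun s hs => by
  have hs' := h (!s) (by rw [orient_swap34]; exact hasSign_neg.2 hs)
  have h1 : hasDup a b c d = hasDup a b d c := by
    rw [Bool.eq_iff_iff]
    simp only [hasDup, Bool.or_eq_true, Nat.beq_eq]
    tauto
  have h2 : oddPerm a b c d = !oddPerm a b d c := by
    rw [oddPerm, oddPerm, blt_comm hcd.symm]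
    grind
  have h3 : quadCode a b c d = quadCode a b d c := by
    simp only [quadCode, Nat.add_eq]
    omega
  simpa only [Lit.mask, h1, h2, h3, Bool.not_xor, Bool.xor_not] using hs'

theorem chiSound_sorted (N : Normalized pt ε) {a b c d : ℕ} (hab : a < b) (hbc : b < c)
    (hcd : c < d) (hd : d < 9) : ChiSound pt ε a b c d := fun s hs => by
  have h1 : hasDup a b c d = false := by
    refine Bool.eq_false_of_not_eq_true fun h => ?_
    simp only [hasDup, Bool.or_eq_true, Nat.beq_eq] at h
    omega
  have h2 : oddPerm a b c d = false := by
    have key : ∀ x y : ℕ, x < y → Nat.blt y x = false := fun x y hxy =>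
      Bool.eq_false_of_not_eq_true fun h => by rw [Nat.blt_eq] at h; omega
    rw [oddPerm, key a b hab, key a c (by omega), key a d (by omega), key b c hbc,
      key b d (by omega), key c d hcd]
    rfl
  simpa only [Lit.mask, h1, h2, cond_false, Bool.xor_false] using sat_chiMask N hab hbc hcd hd hs

theorem chiSound (N : Normalized pt ε) {a b c d : ℕ} (ha : a < 9) (hb : b < 9) (hc : c < 9)
    (hd : d < 9) : ChiSound pt ε a b c d := by
  by_cases hdup : a = b ∨ a = c ∨ a = d ∨ b = c ∨ b = d ∨ c = d
  · intro s hs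
    refine absurd ?_ hs.ne_zero
    rcases hdup with rfl | rfl | rfl | rfl | rfl | rfl <;> simp only [orient, det4] <;> ring
  push Not at hdup
  obtain ⟨hab, hac, had, hbc, hbd, hcd⟩ := hdup
  -- Insertion sort by adjacent transpositions, starting from the last entry.
  have insert1 : ∀ {a b c d : ℕ}, a < 9 → d < 9 → a ≠ b → a ≠ c → a ≠ d → b < c → c < d →
      ChiSound pt ε a b c d := by
    intro a b c d ha hd hab hac had hbc hcd
    rcases Nat.lt_or_gt_of_ne hab with h1 | h1
    · exact chiSound_sorted N h1 hbc hcd hd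
    refine .swap12 hab ?_
    rcases Nat.lt_or_gt_of_ne hac with h2 | h2
    · exact chiSound_sorted N h1 h2 hcd hd
    refine .swap23 hac ?_
    rcases Nat.lt_or_gt_of_ne had with h3 | h3
    · exact chiSound_sorted N hbc h2 h3 hd
    exact .swap34 had (chiSound_sorted N hbc hcd h3 ha)
  have insert2 : ∀ {a b c d : ℕ}, a < 9 → b < 9 → d < 9 → a ≠ b → a ≠ c → a ≠ d → b ≠ c →
      b ≠ d → c < d → ChiSound pt ε a b c d := by
    intro a b c d ha hb hd hab hac had hbc hbd hcd
    rcases Nat.lt_or_gt_of_ne hbc with h1 | h1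
    · exact insert1 ha hd hab hac had h1 hcd
    refine .swap23 hbc ?_
    rcases Nat.lt_or_gt_of_ne hbd with h2 | h2
    · exact insert1 ha hd hac hab had h1 h2
    exact .swap34 hbd (insert1 ha hb hac had hab hcd h2)
  rcases Nat.lt_or_gt_of_ne hcd with h1 | h1
  · exact insert2 ha hb hd hab hac had hbc hbd h1
  · exact .swap34 hcd (insert2 ha hb hc hab had hac hbd hbc h1)

end

/-! ### The refutation -/

def premiseChunk0 : List ℕ := [
  2252542464, 105058816, 2253591040, 106107392, 2270368256, 122884608, 2289242624, 2253656576,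
  2289308160, 2288325120, 140841472, 2289439232, 2271556096, 2504135424, 356651776, 2520912640,
  373428992, 2537689856, 390206208, 2554467072, 2521961216, 374477568, 2538738432, 391254784,
  408032000, 2539787008, 392303360, 2253656832, 106173184, 2270434048, 122950400, 2287211264,
  2271482624, 2289308416, 2271548160, 124064512, 2289373952, 141955840, 3058967296, 911483648,
  1484071680, 3076866816, 3362079488, 2826322688, 892474368, 3056735232, 909251584, 3073512448,
  2521961472, 374477824, 2538738688, 391255040, 392303616, 409080832, 410129408, 2522027008,
  391320576, 2555581440, 2539852800, 392369152, 2271548416, 124064768, 2288325632, 141890560,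
  911418368, 3613598720, 2826253312, 4168496128, 4096922880, 1949439232, 3056735488, 909251840,
  926029056, 3090289920, 3057784064, 910300416, 3074561280, 927077632, 2539787520, 392303872,
  410129664, 3057849600, 910365952, 3074626816, 927143168, 2539853056, 392369408, 2556630272,
  409146624, 2557678848, 410195200, 2539918592, 392434944, 409212160, 2557744384, 410260736,
  2289440000, 141956352, 946091264, 677655808, 1949439488, 3073512960, 926029312, 3090290176,
  1967265280, 3074561536, 3075610112, 944903680, 410129920, 1967330816, 3074627072, 927143424,
  3075675648, 928192000, 3092452864, 944969216, 410195456, 3075741184, 928257536, 2557744640,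
  410260992, 2557810176, 410326528, 3846383104, 2000889344, 1465132544, 2270443008, 2287220224,
  4096923392, 1949439744, 4113700608, 1966216960, 1982994176, 4114749184, 4132574976, 3092387584,
  3093436160, 1967331072, 1984108288, 3091404544, 944969472, 3093501696, 1985222400, 3092518656,
  945035008, 3093567232, 946083584, 3093632768, 946149120, 3327403776, 2556770048, 2000820224,
  2000885760, 4132640768, 2001934336, 1985222656, 4150597632, 1967325712, 4149412368, 4166189584,
  4132700688, 1985217040, 4149477904, 4150526480, 1698824976, 3863085840, 1715602192, 3879863056,
  1732379408, 3864134416, 1716650768, 3881960208, 1734476560, 4132700944, 4149478160, 2001994512,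
  4150526736, 4150592272, 2020934416, 2522096400, 1466254096, 3325166608, 1177682960, 3341943824,
  1194460176, 3358721040, 3864134672, 3880911888, 1733428240, 3881960464, 3864200208, 1733493776,
  3882026000, 1734542352, 4150592528, 2003108880, 392508432, 2217870608, 70386960, 3325166864]

def premiseChunk1 : List ℕ := [
  3341944080, 3358721296, 3326215440, 1195509008, 3881960720, 3326280976, 1178797328, 3343058192,
  1195574544, 3882026256, 1734542608, 1752368400, 3899917584, 1752433936, 2021000464, 3613598992,
  2234648080, 87164432, 2235696656, 3342992912, 1195509264, 3344041488, 1196557840, 88278544,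
  3343058448, 1195574800, 3344107024, 1196623376, 1752368656, 3344172560, 1196688912, 1752434192,
  1752499728, 2270373392, 2217871120, 70387472, 2251425552, 103941904, 88213264, 2252474128,
  2235762448, 105056016, 106104592, 3360884496, 2253653776, 1213466384, 3361998608, 3362064144,
  1214580496, 2252539920, 2504065824, 3327394592, 643040032, 106169120, 2271544096, 140837664,
  4132705056, 3864269600, 1466241824, 1429275680, 2001798176, 1179845664, 2287141920, 1716720672,
  1466242080, 3090220320, 2520843552, 641926432, 105055520, 3611493664, 3613590816, 2557674784,
  105059616, 3359839520, 2289448224, 3023111712, 2503018016, 1429276192, 1430324768, 893585184,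
  4132636448, 944965408, 3093497632, 2001930272, 3038839856, 3575710768, 2501968944, 908133424,
  924910640, 2521891888, 1448150064, 374408240, 3075540016, 3612410928, 2538669104, 407962672,
  2539717680, 1465975856, 3864134704, 3327263792, 374473776, 106038320, 3880911920, 391250992,
  122815536, 408028208, 4150592560, 2271544368, 929367088, 1466238000, 660931632, 124060720,
  140837936, 141886512, 2289435696, 374477872, 4149351472, 3880916016, 928126000, 4150596656,
  3613725744, 947196976, 4150600752, 3613729840, 929375280, 1466246192, 874579248, 1411450160,
  4131456304, 3057714480, 3594585392, 1983972656, 910230832, 373359920, 4148233520, 3074491696,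
  927008048, 390137136, 4150330672, 3613459760, 3094414640, 3057780016, 2520909104, 2789344560,
  2252473648, 1984038192, 1715602736, 1178731824, 2537686320, 2000815408, 1732379952, 1195509040,
  392299824, 3076785456, 2271479088, 1466172720, 392430896, 660866352, 1197737264, 3093562672,
  2556691760, 2825127216, 409208112, 1751385392, 3094611248, 2826175792, 3094742320, 3057784112,
  2789348656, 2252477744, 1984042288, 1715606832, 1178735920, 3074561328, 2537690416, 1195513136,
  2539787568, 410129712, 3613660464, 2808354096, 2271483184, 929305904, 1466176816, 392434992,
  1734612272, 1197741360, 2289308976, 1215567152, 2808358192, 3345229104, 1734616368, 660874544,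
  2826183984, 1948321328, 4112582192, 2501969456, 891356720, 1428227632, 4114679344, 3577808432]

def premiseChunk2 : List ℕ := [
  2504066608, 893453872, 390137392, 3091269168, 3075540528, 3612411440, 2538669616, 1464927792,
  2504132144, 625083952, 88213040, 3612476976, 3880912432, 1196557872, 3075737136, 3344172592,
  2001995312, 659818032, 122947120, 2557740592, 1430394416, 1698829872, 2807174704, 1196561968,
  4149483056, 2270434864, 122951216, 4149487152, 2270438960, 659826224, 891356976, 1428227888,
  3595634480, 407963440, 4132570928, 642910000, 408160048, 1482950448, 140838704, 356652848,
  1715607344, 2253526832, 4132706096, 3327399728, 1179920176, 106178352, 677717808, 1483032368,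
  124078128, 3005285696, 3542156608, 3056665920, 3593536832, 2519795008, 1446053184, 3073443136,
  3610314048, 1462830400, 389088576, 3090220352, 4150330688, 409011520, 3593602368, 3325166912,
  909247808, 372376896, 640812352, 3341944128, 926025024, 657589568, 942802240, 3613590848,
  392365376, 1734542656, 409142592, 410191168, 3900048704, 141952320, 4130477376, 3325171008,
  909251904, 640816448, 3341948224, 926029120, 4164031808, 1197610304, 4150465856, 2808288576,
  392369472, 3076728128, 3613599040, 1466115392, 392373568, 1428227648, 3610314304, 2536572480,
  1999701568, 3075540544, 3612411456, 2001798720, 1464927808, 391185984, 3092317760, 2771519040,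
  3880912448, 2001929792, 3092448832, 410191424, 2557806144, 3308394048, 3610383936, 3880916544,
  2270369344, 2001933888, 1733498432, 3899856448, 678762048, 4149421632, 3576760128, 372311872,
  3058763584, 2521892672, 1985021760, 2790459200, 3093497664, 3361933120, 4130477888, 3058898752,
  1179854656, 4079027792, 857802320, 1394673232, 4146136656, 3559982672, 338757200, 4147185232,
  3610314320, 1999701584, 925959760, 389088848, 942736976, 4148233808, 3074491984, 3611362896,
  927008336, 1463879248, 390137424, 2557544016, 1483802192, 4096919120, 2486306384, 2217870928,
  1412564560, 1681000016, 3341944400, 926025296, 1194460752, 1211237968, 3342992976, 3899786832,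
  946996816, 3074623056, 3343058512, 927139408, 1195574864, 3359835728, 943916624, 3899852368,
  2826110544, 410191440, 1752368720, 3899917904, 2826176080, 3363046992, 410256976, 1752434256,
  2486310480, 2217875024, 1681004112, 1144133200, 3341948496, 926029392, 1462900304, 3074561616,
  1195513424, 4148368976, 3879933520, 2000885328, 927143504, 3631421008, 4148373072, 2806195792,
  2000889424, 121841232, 2826118736, 2826184272, 4096853840, 3593537360, 909182800, 3090220880]

def premiseChunk3 : List ℕ := [
  3627091792, 942737232, 2520844112, 910231376, 3628140368, 2554398544, 4167108432, 3630237520,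
  2556495696, 945882960, 409012048, 3056731984, 674367312, 373426000, 4131587920, 3863152464,
  2789410640, 3326281552, 910362448, 373491536, 641926992, 105056080, 2286094160, 943916880,
  138610512, 3093497680, 3361933136, 3093563216, 3361998672, 409208656, 3057784656, 373430096,
  4131592016, 4165146448, 2288195408, 946083664, 1751390032, 3594586192, 3611363408, 1734543440,
  3023181904, 1466185808, 4112582496, 4113631072, 355534688, 4114679648, 356583264, 3092318048,
  944834400, 3576825696, 2771519328, 3308390240, 1966212960, 3577874272, 3309438816, 944899936,
  4114810720, 3041068896, 88278880, 2822965088, 407045984, 2824013664, 944965472, 3092514656,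
  2824079200, 3360950112, 945031008, 676595552, 1429346144, 4114814816, 3041072992, 2235766624,
  1967331168, 88282976, 3897825120, 1967335264, 2824021856, 2824087392, 3610314848, 3344107616,
  2520844400, 2253654128, 86440546353, 91272384561, 17737846833, 90736562225, 22033862705,
  18527424561, 17738895409, 27134136369, 90736562241, 22033862721, 27134136385, 95032578097,
  87533162545, 91828129841, 26329878577, 23091875889, 17739943985, 18830463025, 95032578113,
  90737610817, 91828129857, 26329878593, 95032578129, 87533162577, 26329878609, 18796908625,
  17739944017, 90738659377, 95033626673, 17740992561, 26330927153, 90738659393, 30625894465,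
  14771425345, 99328594001, 87802646609, 26330927185, 87802646625, 14771425377, 23361359969,
  91005063233, 95300030529, 22302363713, 27167756353, 95301079105, 91006111809, 91861749825,
  26598379585, 22303412289, 95301079121, 26598379601, 99597094977, 91007160385, 95302127681,
  92131233857, 96426201153, 30894395457, 22304460865, 27706724417, 99597094993, 30894395473,
  99597095009, 86712193121, 104965804129, 92097679457, 30894395489, 23361425505, 22304460897,
  23411757153, 91008208961, 35190411329, 103893110865, 18010542161, 88072196193, 23630909537,
  88072196209, 23630909553, 95569580113, 26866880593, 31749050449, 99865595985, 83558142033,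
  31162896465, 26867929169, 99865596001, 91275661409, 79212843105, 92097744993, 83558142049,
  31162896481, 23428599905, 104161611857, 35458912337, 104161611873, 91276709985, 92367229025,
  35458912353, 35458912369, 23630975089, 27925942385, 100134096993, 82971005025, 83574984801,
  87869952097, 31431397473, 18529718369, 104430112865, 82972053601, 83777359969, 88072327265,
  35727413345, 18530766945, 31432446049, 104430112881, 35727413361, 104698613873, 87535521905,
  92451246193]

def premiseChunk4 : List ℕ := [
  35995914353, 23094235249, 82146697281, 91005067329, 91038621761, 100131872833, 95870459969,
  22285590593, 31412396097, 5676146753, 27150983233, 5692923969, 82147745857, 95032647745,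
  95301083201, 95334637633, 91844976705, 91861753921, 26581606465, 22018203713, 5945630785,
  23125499969, 5962408001, 23142277185, 31732211777, 95032647761, 95301083217, 95334637649,
  86442713169, 86711148625, 87516454993, 87566786641, 26581606481, 26615160913, 31681880145,
  18025226321, 30910128209, 18830532689, 5962408017, 99597099073, 91007164481, 95302131777,
  91040718913, 30877622337, 22287687745, 26582655041, 23361429569, 27689951297, 6231892033,
  23411761217, 99597099089, 99630653521, 96375873617, 95335686225, 30877622353, 30911176785,
  17992720465, 26582655057, 6231892049, 99597099105, 99630653537, 91007164513, 91040718945,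
  87836270689, 92131237985, 30877622369, 30911176801, 17992720481, 22287687777, 23361429601,
  6231892065, 91041767489, 22288736321, 26583703617, 30878670913, 23681245249, 35173638225,
  26583703633, 22288736353, 30878670945, 92350390385, 96645357681, 35173638257, 90736697393,
  95870525489, 17722253361, 22554091569, 22587646001, 31412461617, 5407776817, 86442778673,
  95032713265, 95603138609, 90737745969, 91274616881, 17723301937, 26313236529, 26883661873,
  22018269233, 22555140145, 5408825393, 23125565489, 31715500081, 5979250737, 23159119921,
  95032713297, 95569584209, 95603138641, 83221553233, 82718236753, 26313236561, 26850107473,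
  26883661905, 13965205585, 14502076497, 5408825425, 5945696337, 31715500113, 5979250769,
  14569185361, 90738794545, 91275665457, 95570632753, 92114526257, 17724350513, 22556188721,
  26851156017, 5409873969, 22589743153, 23428603953, 99865600081, 82685730897, 17724350545,
  31146123345, 31179677777, 26851156049, 6248734801, 14838669393, 99865600097, 82685730913,
  91275665505, 92080971873, 91309219937, 31146123361, 23361495137, 22589743201, 6248734817,
  14838669409, 23428604001, 17725399089, 22020366385, 26852204593, 82686779473, 83760521297,
  35442139217, 26852204625, 92350455905, 31147171937, 92350455921, 96645423217, 35442139249,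
  90737811505, 95032778801, 95871639601, 86442844209, 87550140465, 22018334769, 26313302065,
  27152162865, 17723367473, 18528673841, 31682011185, 5677326385, 5996093489, 31765897265,
  90737811521, 95032778817, 95871639617, 82147876929, 83221618753, 100401487937, 83305504833,
  22018334785, 27152162881, 31413575745, 5677326401, 14267260993, 14535696449, 5996093505,
  31765897281, 90738860081, 87249199153, 87282753585, 95872688177, 96459890737, 22019383345,
  30609317937, 27119657009, 19066593329, 5678374961]

def premiseChunk5 : List ℕ := [
  27153211441, 90738860097, 100134101057, 100167655489, 95033827393, 82954231873, 95872688193,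
  96459890753, 22019383361, 14234755137, 27119657025, 5678374977, 14268309569, 6215245889,
  100134101089, 100167655521, 87869956193, 31414624353, 14234755169, 19066593377, 14268309601,
  18563276897, 6265577569, 14855512161, 95840182321, 95873736753, 22020431921, 31415672881,
  28009898033, 90739908673, 104463671361, 95873736769, 31415672897, 14269358145, 28009898049,
  104463671393, 82955280481, 100168704097, 31415672929, 96729374833, 35710640241, 27120705649,
  27154260081, 95033892913, 86443958321, 87517700145, 91812667441, 91846221873, 26314416177,
  31683125297, 5946875953, 23126745137, 23462289457, 95033892929, 100402602049, 83222732865,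
  91812667457, 83491168321, 91846221889, 92181766209, 26314416193, 13429514305, 22019448897,
  14503256129, 5946875969, 23126745153, 23462289473, 100402602065, 100436156497, 83222732881,
  87517700177, 83256287313, 26314416209, 31683125329, 31716679761, 14503256145, 5946875985,
  14536810577, 14805246033, 87518748721, 91813716017, 100437205041, 26315464753, 31684173873,
  31717728305, 32321708081, 83223781441, 100437205057, 26315464769, 31684173889, 31717728321,
  32321708097, 104732172369, 83223781457, 100437205073, 26315464785, 31684173905, 31717728337,
  35979141233, 36012695665, 92082217009, 30610497585, 26315530289, 27691262001, 92082217025,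
  96377184321, 30610497601, 96377184337, 30610497617, 92082217057, 30610497633, 86711218257,
  95301152849, 95569588305, 95619919953, 26581676113, 26850111569, 26900443217, 31195410513,
  5979254865, 99597168721, 99865604177, 99915935825, 96443052113, 30877691985, 31146127441,
  31196459089, 26582724689, 5426655313, 6248738897, 99597168737, 99865604193, 99915935841,
  92080975969, 78441099361, 91326001249, 92148084833, 17992790113, 30877692001, 31146127457,
  31196459105, 9402855521, 22556192865, 23361499233, 5426655329, 22606524513, 6231961697,
  23411830881, 6248738913, 23428608097, 104211951697, 17993838673, 35173707857, 26583773265,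
  26852208721, 31147176017, 6518222929, 99598217313, 92350460001, 35442143329, 31147176033,
  22607573089, 6518222945, 103893184625, 92350460017, 35442143345, 6518222961, 91006251073,
  95301218369, 95888420929, 100401492033, 78708551745, 78976987201, 100485378113, 22286774337,
  26581741633, 27118612545, 27168944193, 5694107713, 5962543169, 10291064897, 91007299649,
  99597234241, 100134105153, 100184436801, 95302266945, 95839137857, 95889469505, 96459894849,
  22287822913, 30877757505, 31414628417, 31464960065, 27119661121, 5695156289, 27169992769,
  6232027201, 27740418113, 91007299681, 99597234273]

def premiseChunk6 : List ℕ := [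
  100134105185, 100184436833, 87249203297, 87786074209, 87299534945, 87836405857, 22287822945,
  30877757537, 31414628449, 31464960097, 9402921057, 17992855649, 5695156321, 18580058209,
  6232027233, 6265581665, 104480452673, 95840186433, 95890518081, 22288871489, 35173773377,
  26583838785, 27120709697, 31415676993, 91008348257, 104430121057, 104480452705, 87300583521,
  35173773409, 35710644321, 31415677025, 95840186481, 96645492849, 96729378929, 35710644337,
  27120709745, 95302332481, 99597299777, 100452937793, 78122463297, 91007365185, 91812671553,
  92081107009, 91863003201, 92131438657, 92181770305, 26582855745, 30877823041, 31733461057,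
  22287888449, 5963657281, 23143526465, 6232092737, 23411961921, 23462293569, 95302332497,
  99597299793, 100452937809, 87786139729, 78978101329, 87568035921, 79246536785, 87836471377,
  26582855761, 30877823057, 31733461073, 18798227537, 19066662993, 5963657297, 6232092753,
  19116994641, 78123511873, 91813720129, 26583904321, 23094243393, 31734509633, 95303381073,
  103893315665, 104748953681, 26583904337, 5964705873, 18849607761, 31734509649, 6501576785,
  35979145329, 36029476977, 23094243441, 78123577409, 96427520065, 30878937153, 22289002561,
  26583969857, 99598413905, 103893381201, 105017454673, 87787253841, 96427520081, 30878937169,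
  26583969873, 6233206865, 19118108753, 27976478801, 104967123041, 105017454689, 87787253857,
  92082221153, 30878937185, 99865673825, 100134109281, 100201218145, 82685804641, 83021348961,
  83574997089, 22556262497, 31146197089, 31414632545, 31481741409, 14301872225, 6265585761,
  91276787809, 104497234017, 35710648417, 31415681121, 6535069793, 32304873569, 104161689713,
  104430125169, 96645496945, 96729383025, 35710648433, 35777757297, 27993129073, 6535069809,
  95570772049, 99865739345, 100402610257, 100469719121, 83289849937, 83558285393, 26851295313,
  31146262609, 31750242385, 5980438609, 6248874065, 100403658833, 26852343889, 14504312913,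
  31684182097, 5981487185, 31751290961, 104161755249, 104698626161, 35979149425, 36046258289,
  22557376625, 5981487217, 23731781745, 99866853457, 104161820753, 82686984273, 96377192529,
  96444301393, 31147376721, 26852409425, 14772813905, 27657715793, 6249988177, 99866853473,
  91276918881, 92082225249, 92350660705, 92468101217, 31147376737, 14772813921, 6249988193,
  95840260209, 104430194801, 104698630257, 104782516337, 87250325617, 88156295281, 27120783473,
  35710718065, 35979153521, 36063039601, 19336155249, 100135293025, 104430260321, 105051017313,
  88173138017, 31415816289, 35710783585, 36331540577, 18530914401, 6266769505, 91021844801,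
  91038622017, 70100656449, 70117433665, 95887237441]

def premiseChunk7 : List ℕ := [
  22033932609, 27134206273, 27167760705, 95049425217, 95317860673, 95334637889, 91022893377,
  69564834113, 91039670593, 70370140481, 91844976961, 70386917697, 91861754177, 13445046593,
  26329948481, 26598383937, 26615161153, 22034981185, 23108723009, 23125500225, 23142277441,
  31732212033, 95049425233, 95317860689, 95334637905, 70386917713, 87566786897, 26329948497,
  26598383953, 26615161169, 18008449361, 18813755729, 18025226577, 82165571905, 99613876545,
  99630653761, 91023941953, 96392651073, 69565882689, 91040719169, 70639624513, 92131238209,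
  30625964353, 30894399809, 30911177025, 26616209729, 23411761473, 82165571921, 99613876561,
  99630653777, 86728974673, 70639624529, 70656401745, 13446095185, 30625964369, 30894399825,
  30911177041, 18009497937, 19116794193, 86460539233, 86728974689, 91023941985, 70656401761,
  87836270945, 92131238241, 30894399841, 30911177057, 18009497953, 19083239777, 22321242465,
  23411761505, 103909892417, 91024990529, 88105754961, 35207192913, 91024990561, 22322291041,
  91024990577, 22322291057, 90753474865, 95853748529, 70134276401, 17739030833, 22587646257,
  86459556145, 95049490737, 69833335089, 70370206001, 91845042481, 70403760433, 17740079409,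
  26330014001, 26883662129, 23108788529, 22588694833, 23125565745, 23159120177, 95049490769,
  95586361681, 82701459793, 82718237009, 83255107921, 70403760465, 17740079441, 26330014033,
  26866884945, 26883662161, 14518853969, 14569185617, 86460604721, 99899154737, 95587410225,
  69834383665, 96443048241, 17741127985, 31162900785, 31179678001, 26867933489, 27673239857,
  22589743409, 23395049777, 23428604209, 99882377553, 82702508369, 95587410257, 82719285585,
  70639690065, 83524591953, 70673244497, 83558146385, 96443048273, 17741128017, 30626029905,
  31162900817, 31179678033, 26867933521, 14838669649, 99882377569, 82702508385, 91292442977,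
  83524591969, 70673244513, 83558146401, 31162900833, 13983031649, 22589743457, 14838669665,
  23428604257, 35475693873, 22590791985, 83794075985, 15108153681, 83794076001, 13984080225,
  22590792033, 92384010609, 13984080241, 15108153713, 90754588977, 95871639857, 86459621681,
  87264928049, 70101836081, 87281705265, 70370271537, 87550140721, 70420603185, 22035112241,
  27135385905, 27152163121, 90754588993, 95049556289, 95854862657, 95871639873, 70101836097,
  70370271553, 70420603201, 83305505089, 22035112257, 27135385921, 27152163137, 14250484033,
  14518919489, 14267261249, 14586028353, 86460670257, 70102884657, 87282753841, 87819624753,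
  96459890993, 22036160817, 31431401777, 31448178993, 17741193521, 27136434481, 27673305393,
  27153211697, 19150479665, 90755637569, 100167655745]

def premiseChunk8 : List ℕ := [
  95855911233, 70102884673, 95872688449, 22036160833, 31448179009, 27136434497, 14788403521,
  14268309825, 14855512385, 27740414273, 87265976673, 87282753889, 70690087265, 87869956449,
  31431401825, 31448179041, 18546499937, 19083370849, 14855512417, 90756686129, 90756686145,
  14252581185, 82988835169, 14252581217, 82988835185, 14252581233, 95050670385, 100436156721,
  86460735793, 87534477617, 91829444913, 70371385649, 87551254833, 91846222129, 70639821105,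
  31699902769, 31716679985, 18815000881, 18831778097, 23462289713, 95050670401, 91829444929,
  83507945793, 70706929985, 92181766465, 26331193665, 30626160961, 31699902785, 31716680001,
  14520033601, 23109968193, 14536810817, 23126745409, 14872355137, 95050670417, 87534477649,
  87551254865, 70706930001, 26331193681, 31699902801, 31716680017, 14520033617, 18815000913,
  14536810833, 14872355153, 19167322449, 95317930321, 95586365777, 95619920209, 78943367505,
  69850116433, 70386987345, 70403764561, 26598453585, 26866889041, 26900443473, 9720574289,
  86729044305, 99613946193, 99882381649, 99915936081, 95587414353, 95620968785, 70656471377,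
  70673248593, 18009567569, 30894469457, 31162904913, 31196459345, 99613946209, 99882381665,
  99915936097, 69851165025, 91326001505, 70656471393, 70673248609, 92148085089, 31162904929,
  31196459361, 23378276705, 22606524769, 23411831137, 95320027473, 95588462929, 95622017361,
  70925955409, 100990726481, 35458920785, 35492475217, 10796413265, 99916984673, 100990726497,
  92417569121, 35458920801, 23647760737, 22607573345, 10796413281, 96712536433, 35458920817,
  35492475249, 23647760753, 22607573361, 10796413297, 23681315185, 91023028545, 95317995841,
  95888421185, 70118617409, 70387052865, 100451823937, 100485378369, 22303551809, 26598519105,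
  27168944449, 31765901633, 91024077121, 99614011713, 100184437057, 70119665985, 95889469761,
  22304600385, 30894534977, 31464960321, 27169993025, 27740418369, 99614011745, 100150882657,
  100184437089, 87299535201, 70656536929, 70690091361, 31431405921, 31464960353, 19083374945,
  18580058465, 19150483809, 91025125697, 103910027585, 70120714561, 27171041601, 104446898529,
  87300583777, 100185485665, 70959575393, 35760976225, 9991172449, 19419967841, 91025125745,
  104446898545, 104480452977, 87300583793, 70959575409, 9991172465, 19419967857, 95319109953,
  99614077249, 91024142657, 70388166977, 91863003457, 92131438913, 70706934081, 92181770561,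
  26599633217, 30894600513, 31733461313, 22304665921, 23462293825, 95319109969, 99614077265,
  100452938065, 86729175377, 70388166993, 78978101585, 70656602449, 26599633233, 30894600529,
  31733461329, 18009698641, 18815005009, 18848559441]

def premiseChunk9 : List ℕ := [
  70389215553, 91864052033, 92400922945, 26600681793, 95320158545, 103910093137, 70389215569,
  18010747217, 18849608017, 104715399537, 87535530353, 70976418161, 19436810609, 99615191361,
  23379521857, 28043587905, 99615191377, 70926152017, 36297978193, 19118109009, 99615191393,
  86730289505, 19118109025, 23413076321, 99882451297, 100150886753, 100201218401, 82702582113,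
  70136447329, 83021349217, 70673318241, 70690095457, 83574997345, 31162974561, 31431410017,
  31481741665, 14301872481, 91293565281, 104178467169, 104446902625, 99883499873, 70137495905,
  100202266977, 101024350561, 35777757537, 13984153953, 31432458593, 10007953761, 31482790241,
  104446902641, 95856968049, 70959579505, 83844481393, 96729383281, 35727425905, 14302921073,
  27187822961, 10830037361, 28009906545, 95587549521, 99882516817, 100469719377, 70404948305,
  70673383761, 26868072785, 31163040081, 31750242641, 14570373457, 95588598097, 104178532689,
  82703696209, 100420436305, 70405996881, 101041193297, 15141847377, 104715403633, 91880833393,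
  70976422257, 92451258737, 26869121393, 23111025009, 23647895921, 14571422065, 15141847409,
  99883630929, 70674497873, 31164154193, 27674493265, 27724824913, 15158690129, 28043592017,
  99883630945, 92099002721, 70674497889, 92149334369, 70942933345, 36314759521, 13984285025,
  14839923041, 23429857633, 104446972273, 104715407729, 104782516593, 70422778225, 70976426353,
  27137560945, 36063039857, 14588203377, 18883170673, 15125074289, 100152070497, 105051017569,
  70691279201, 83576181089, 70959714657, 31432593761, 36331540833, 14789595489, 19151671649,
  95603143249, 95619920465, 69833339473, 69850116689, 74681954897, 74698732113, 18025296465,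
  26615231057, 26900443729, 1650733649, 5945700945, 5425607249, 31195411025, 1684288081,
  70639694417, 18026345041, 30911246929, 31196459601, 5409878609, 1131688529, 5426655825,
  27706798673, 1953772113, 99915936353, 70639694433, 92114530913, 92131308129, 74968216161,
  30911246945, 31196459617, 22321312353, 1131688545, 5426655841, 22606525025, 1953772129,
  23428608609, 18027393617, 35207262801, 35492475473, 1132737105, 22322360929, 1132737121,
  22607573601, 22322360945, 22607573617, 2223256177, 91039806017, 95334773313, 95888421441,
  69564969537, 70370275905, 74665243201, 74413584961, 74682020417, 70420607553, 74715574849,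
  27152167489, 1382363713, 5677331009, 5945766465, 1399140929, 1667576385, 31732347457, 1701130817,
  91040854593, 100184437313, 95335821889, 74414633537, 74951504449, 70690091585, 1400189505,
  27169993281, 27740418625, 91040854625, 100184437345, 70639759969, 74414633569, 87299535457,
  87836406369, 70690091617, 74985058913]

def premiseChunk10 : List ℕ := [
  87869960801, 22321377889, 31448183393, 31464960609, 1970614881, 91041903169, 104480453185,
  847589953, 87300584033, 22322426465, 1401238113, 87300584049, 22322426481, 35744199281,
  2240098929, 95335887425, 99630854721, 100452938305, 91040920129, 91846226497, 70388167233,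
  91863003713, 26616410689, 31716684353, 1651913281, 1668690497, 5963657793, 23143526977,
  23411962433, 6282424897, 95335887441, 99630854737, 100452938321, 87568036433, 87836471889,
  75001901649, 26616410705, 30911378001, 31733461585, 18026476113, 1651913297, 1668690513,
  1987457617, 6282424913, 1669739073, 1669739089, 2256941681, 1938240065, 1938240081, 1938240097,
  95871648305, 69833409073, 74715578929, 22588768817, 26883736113, 27185726001, 1113932337,
  31447138865, 5710889521, 5996102193, 69834457649, 74129424945, 70136447537, 95906251313,
  74985062961, 22589817393, 31179751985, 31481741873, 1114980913, 5409948209, 1416970801,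
  27723645489, 100201218657, 82987795041, 70639764065, 70136447585, 70673318497, 74968285793,
  74985063009, 31448187489, 31481741921, 1416970849, 5711938145, 14301872737, 1970618977,
  14855520865, 74130473521, 22590865969, 1384464945, 82988843617, 14302921313, 2240103009,
  82988843633, 14302921329, 2240103025, 100436165169, 100469719601, 92114666033, 70404948529,
  74699915825, 91879785009, 92148220465, 1115046449, 22589882929, 1685471793, 5980439089,
  23462298161, 95604326993, 99899294289, 100469719633, 83256296017, 83289850449, 83591840337,
  26884850257, 31179817553, 31716688465, 31750242897, 1685471825, 5980439121, 6248874577,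
  1686520369, 1686520401, 2256945777, 1116160561, 1955021393, 1955021409, 95872766513,
  100436169265, 100486500913, 87282831921, 74716697137, 87601599025, 70706942513, 75001909809,
  27153289777, 31448257073, 31767024177, 1383486001, 1702253105, 5997220401, 19150557745,
  95872766529, 100167733825, 100436169281, 74397930049, 70371398209, 83306631745, 83575067201,
  70706942529, 31767024193, 1383486017, 14268387905, 14805258817, 1702253121, 5997220417,
  14587155009, 14855590465, 14872367681, 100487549489, 27154338353, 1703301681, 31768072753,
  100487549505, 14269436481, 1703301697, 31768072769, 27154338417, 36063040113, 2256949873,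
  96461083185, 1384600113, 1971802673, 96461083201, 14269502017, 1971802689, 100168847969,
  105051017825, 1971802721, 1653039665, 23463420465, 1653039681, 1988584001, 23463420481,
  104732254801, 105000690257, 83878175313, 1653039697, 14806377041, 1988584017, 91326071649,
  99916006241, 100184441697, 100201218913, 78441169761, 74414637921, 74951508833, 70136447841,
  74968286049, 79280030561, 22606594913]

def premiseChunk11 : List ℕ := [
  31196529505, 31464964961, 31481742177, 9990128481, 10526999393, 1970619233, 6265586529,
  104480457569, 100185490273, 22607643489, 35760980833, 35777758049, 9991177057, 2240103265,
  32304874337, 104480457585, 75254547313, 22607643505, 35777758065, 9991177073, 2240103281,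
  28009907057, 95621104465, 99916071761, 100452942673, 100469719889, 74683138897, 26901627729,
  31196595025, 31733465937, 31750243153, 1668694865, 5963662161, 6232097617, 1685472081,
  1953907537, 6282429265, 95622153041, 104212087633, 100470768465, 36029481809, 5427839825,
  1669743441, 1686520657, 31751291729, 91880833905, 75271390065, 92451259249, 36046259057,
  5427839857, 23144579953, 5981487985, 2256946033, 23731782513, 99917185873, 104212153169,
  70657721169, 96444302161, 36297982801, 1938244433, 1955021649, 27724825425, 99917185889,
  74147382113, 92132557665, 92400993121, 92149334881, 92468101985, 31197709153, 1938244449,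
  23413080929, 1955021665, 23748625249, 95889544001, 100184511297, 100486501185, 74414707521,
  74683142977, 70656611137, 74951578433, 27170067265, 31465034561, 1400263489, 5695230785,
  1668698945, 6232101697, 95890592577, 70389224257, 70422778689, 100487549761, 35761050433,
  36029485889, 1401312065, 31466083137, 1669747521, 1703301953, 31768073025, 104782517105,
  70422778737, 27171115889, 36063040369, 18883171185, 2256950129, 70691279681, 96461083457,
  70959715137, 31466148673, 35761115969, 1401377601, 1938248513, 27741606721, 100185625441,
  105051018081, 31466148705, 36331541345, 1938248545, 1971802977, 19151672161, 91864130369,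
  70657729345, 92132565825, 79516099393, 92401001281, 70708060993, 92182897473, 31734588225,
  36348322625, 1669817153, 23463420737, 104749032273, 105017467729, 70389293905, 70657729361,
  70926164817, 70708061009, 75003028305, 31734588241, 36029555537, 36297990993, 36348322641,
  1669817169, 18849686353, 1938252625, 6233219921, 19118121809, 19168453457, 104782517361,
  70942872689, 74717746289, 83307680881, 75254617201, 27187893361, 36063040625, 14571426929,
  2240173169, 15125075057, 2256950385, 100202402913, 104497370209, 105051018337, 70137631841,
  83576181857, 31482926177, 35777893473, 36331541601, 14839927905, 1971803233, 6266770529,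
  2240238689, 100470842449, 83559408721, 70708061265, 31751365713, 36046333009, 1686594641,
  1988584529, 15158699089, 1010, 1522, 2546, 1778, 2802, 3314, 1906, 2930, 3442, 3698, 1970, 2994,
  3506, 5554, 3762, 5810, 3890, 6962, 7474, 7730, 2002, 3026, 5074]

def premiseChunk12 : List ℕ := [
  3538, 6610, 3794, 6866, 7378, 3922, 7506, 7762, 3986, 6034, 7058, 7570, 7826, 7954, 2018, 3042,
  5090, 3554, 3810, 3938, 4002, 6050, 7074, 7586, 7842, 7970, 4034, 8066]

/-- The premises of the refutation, in the encoding read by `decodePremise`. -/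
def premiseCodes : List ℕ :=
  premiseChunk0 ++ (premiseChunk1 ++ (premiseChunk2 ++ (premiseChunk3 ++ (premiseChunk4 ++
    (premiseChunk5 ++ (premiseChunk6 ++ (premiseChunk7 ++ (premiseChunk8 ++ (premiseChunk9 ++
    (premiseChunk10 ++ (premiseChunk11 ++ (premiseChunk12))))))))))))

def derivationChunk0 : List ℕ := [
  7792493, 5154024, 426435638004516226344529859880073562, 306326753767449035280060543543104681772,
  1777387854118073001494519842899653474650,
  1108196321538772639528905617792615765798568664877801588523, 12451738198,
  271320747326654647063300811326575510109287649029290330, 192798155734219118931875743319851,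
  3448166882468466986451673, 3467757677898081027830501, 206612195736892133,
  1010453289259387146908101677500972606111,
  319031284958971716038631667097159084621898379406408193831477819783223642, 12485313157,
  29819622167760198287971720224055385661124032858, 13306558571446827281259605022601242492450604,
  4945082, 7177945, 30032152316,
  77151501885784465865117375195496604536055915706340759785233519757656,
  66228980383160340558873333563528844900710976059738,
  27145523703527422220332826533597615815704745851331105378601682853256203814867978792190030402044258416665894324614745159485393619548506,
  169400023914443288064940330263488557318487879474074622318705283672659900773533811603803,
  136428052149074, 152293105012545388994471222213735243, 41174582053, 3638135, 8464404,
  511366294709109060441418937830978479952967905773760271697780786213468511,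
  46710592332573021386497161856653391324057698566017838861436200400485451653117864991532865382676415442787804588064916939,
  432661396398075044358583662938272451664633553424134773954044506813634911,
  72907508438469563044224282759038923380770574723075643867625503592199657909453984213,
  58494568984928, 693050148218327896,
  65553070806218393452668888476129057083334110381533219044301231404654021980783277680400687020769077479166600939458267099964152148,
  195234943481339319849121706791303, 14482280839, 17133732231,
  9924588382977170562996040106681094589567251245928531345134562402186159,
  1301088112602719650645720599704691961975258024937120365390007694706992878812633643293420239187376117725496252481764721894302771,
  4080613, 8591408, 8415239, 28490655495457118,
  179604028908647198322234068614680953056127704727608, 41510802375, 3393963,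
  2280071379559013369093264796962781377385150553497301316756680868785355039970072158662173559134,
  18119478936510910377781193244402318085188031572674789716884692056133350229870430116012432592152232850135390,
  25571404902414096775787140541659453580856712710860244259608924792047686898,
  228726482480093968030339345395549264816097098833160171518860028693957576405052,
  698060078335602717,
  17949196157301962814391603760252995924411807664009379734718813624587919300241758,
  7982754995028461638259334140458104171910879259940639045799446878,
  400349042703477972729372264215015767871742653264993237590930272014211764523025896577012276,
  73455324422539650227626814539034167000029426501941072739169296695885849419401697620,
  12343737588139128962216516208744718272242826505054848523184478,
  23075710389527066917861018035996118811793,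
  172949548329643275987050109569763655803563861362229798738741752912997141758418112565411133354279513314331875233049491683770856005090721530694075377541873416732508015503056475568555721999743310,
  127508914871935279129136122131783742375454629504512105378215072327037319502,
  6489998266105970735300736229023813930005522341239006352,
  4726139813441092328883249022286089805926612230821736700756906492176911140921559203545614305862947123,
  221647298522814583275828158205309188,
  7242793565810010850441951061426565487939474713461164074755858899221350286832567710673319373293192676515440712574040595404893406883029790976032989903966624,
  3274697773691700948317548165738895405525, 175649715784402395186272160803097149189946753383217563,
  1774386128875151944723003160856556298015793886512068588090243483, 10226111, 15923598258, 9128117,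
  12515313924704554032496905196705607594469514249729923782350891139221854,
  1420928350313543834532644991732751017080320900454233560552322895218117976960, 3822503,
  1430676581, 4405061864604102240480594731312330205314672393579527979170145217557687736660,
  7927697, 18723714141, 1080994792573738631395321868951083447335731987125741642540372570303697808,
  1242120344321694299246478164930968477579836059773374638974412894217630580111770379726602802,
  2063714731725384923503533747297680123878243127661376853978385255223711207986,
  6412109201472196224168371116062540726345788103985716624305339168634944743485739, 4166654,
  3839835793519538036758635196854926669683106215374140167087,
  1010447910287859953242222068559038159188, 15244781667523328594317636758010063608326669771,
  362193131570462264451918969616960905465013277583435391854174903432103875669347631627556379,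
  910975232936934678749807306118883231179, 5969200710305208233432380,
  3417915006679542661413145040043686188478395211770791974204, 1224956270026430152810088814,
  83002208323348134146620815839656375263786610363407666540810417237386212087992302106955, 4998341,
  1410274890531480571810841943871785110812236036990985093234017541856507038044, 1416189588,
  6944416, 7161555, 172734233247829, 9140406, 9296505998388101153880145]

def derivationChunk1 : List ℕ := [
  12254468436, 8415240, 3363757999715513895484686395346574997592, 34025801699, 35301279798,
  174101685512246, 144896048751082, 713684374454716483, 712553319167381896, 174177711442409,
  792330997415542917453, 101853391840967315143562629417939037718821596488014, 7957716791542520,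
  6878974889650460481958878608766354635467387484664456465299055232485616899838369008745044704789889179353210547068377242657747749205,
  3350017434048192251630799387402287186818, 707800788991919197,
  608501343836631556764275448756083345176848087369495004509209328841365645096945, 8312803, 8329199,
  7989146, 8210386, 65553352880801426023072638162999155087190354953319859161326053402, 21146638680,
  53399999658913666944423263915607902018666311219420271266761010051611731021210626336608814552567098008063631749992236475203766736557278981,
  531481445761273980086164669184156995738102346064651438035637471322851132592296443217631914919355295410359269678262616198023068203847882610751818,
  571086531303630793067462111597519545352639083259797698624447636538584506708053309260896597,
  1413882977,
  18291862609374084426276591712497041080660731780812053800736096544327077194583395948952522117235425,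
  120266334947662574686178978976471514843645132421277691255155861587227616439776432936697562416595789091439786756345882616516792226054556558909992785180059315897547166132738272765992226541009237,
  856151908739665889026, 19236524658337964770845209882022769421249034628379989784409888944,
  481712805474054191081827,
  49922018720351201164095562233823868190317452127752363461614320167776848879983843237058863538540398989392705444128735010517033788704094974063451231372342421618049904953778801374786964531038393132769179755497,
  43334433453682523335177652458206045395464113063780297252676747946374371558659703539576238528450492594026053987720349554420963849385594417552926552022117848463056644442020561339823519863782,
  7341826, 42405132466, 6973092, 6887054, 5141108812736600852150092315946667001944803066,
  90113065872813079096875007116888265971711181987704567009620072702497619911704040135000,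
  1095675827807405281137488301203184551527899890529147471886886265910490885, 116165217700213,
  54324590410217135046518536633566423598896971350725399090632157852280795263295544654837554696297673708671296002633157660676716081850989606809971051531753241180438658789162319193054380566360892772812938730708054530311844903737699,
  71926683912348007015133634267357233070584856795480,
  2509331862817164908778984365858109404067855036064066447274575745363911820352771036491506961870790272139479414056972568367609102633302324209079566349951032415964821680,
  3869836958129908915122733209469982440449262491555051079944953384795041771685871501519341766837373082726735828576680611027337546232,
  33064991438150461257159522756128089661688997289443182014068979962867467385735984872711199234201239879676688544950141812,
  222635500539192584423034928846119722, 987689109359395189268954551708694828278, 43242243843,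
  545453259946634679222074807822581113269562699807894607268122243844783078820194166538125370615235065062637354866646221442833264416581954753822169644099492051474,
  15146395576026908835817458156,
  46423438191897906771050986178589079293051356565398768269214447797124638271198347080340825559457787524166878136972489569,
  35569761459006048213608707025864919540478731189571736014882961987130483569841549403472242150698739765951384829142971627209304008895834607,
  69049133264188781556653491261948058497843027303412408135293916394201643906272272637200064867047580049004003933609587754,
  56719572899589639927923507823348640086610185930721325679898337073295296724909782851987951,
  95708684773190080880686399367864213758873369283235604251084501022840671638975677940017428483508601972044373878810992417024056383980,
  237839341693637347820,
  76335162218120461254547669850918946009197062817617073813356658545524913092007561711,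
  16188956731674369627594128987147850288272159732198089270637797,
  963442344946311363283816086074050086194409570710860053, 43101512063,
  637924465275283883391367741701383030423095406709644421642446921602338122888249955793171798354839649961809967560935394656414796002930800984794904086404077011578247195887116745045,
  58161940642191055, 2223540311487411831902,
  64132935488554175461894067001682118655678888784955617690882237665708309464625756661372465731576025217707146461052919884946922046386924541173736336354831842415012599510244328479926795070072292465415745396786649715131430662894634,
  262688494427215720168149323012653881140780237442184120638187453101430464936303250467522469267820616998476228777030329735074855133538668225930899692081431120913651643043147747467623020055243421698628331650750386835407714528345287011,
  174550937485696, 8747096, 1598299325719946768800183580845019212306,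
  1300054851415647468288059771067364914113356144044990987585720296844666973070896308043741258604158861434196109696919729344559483,
  147917607987579, 3839820834227984813920158544895377633016755780329710963067,
  2280255394315385317696631437873274002370819473694483179563948523399911392128384430570381520213463370085451933264959845532075997219291959411250714614259039190645077,
  12197724610683311286948351536026437366357763816870583755236800231461601,
  267498636439386324023460496043749113921206321548871041546657164562449,
  236638618210768175062074359001383231499126542831619,
  66721361023951143922287416398105420370556115589933200848073558569,
  85938911723405359678324411106139531871359146803165498897379188531134086758386926667217605206355857520,
  56810911762074547445230436360416922838834329704,
  18871365959533910796036153298742067579004982925911098283923325319699610837649958,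
  723123375150448931, 238374138398146196118471678990028486441258415427587,
  204480594120079173706848773397852631118116589570485060832102049089375614863626887591749004684588614550409207262130803452191361428821109789414609614206163354757556524299513190066205446768033856904351003757945423,
  10697268, 7890823,
  209764285430404921974872310443602441746219993478449220930398761567864553943874890750443,
  11434828548480696405598200823331165896124671255991396899440069898410659440847215,
  784470742799073318420515818129266055620014590697029638739650939051208682473299486996695398,
  701894323995211791140052810580100273399821856929101420618330316817729043802615954443436114,
  31856582567687015038385757011892410462958159134424316238961434082143216289944261370982360369708173346739525674636302284939452872576911734512622197778585513541772159320257056346482738751998060229870065029635258578431306469421856603608185831971872424378736442784532614230974521739622,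
  2849884607973779089384340017089047395820536426731974501753718651699245100972185367371111393638,
  108689405154258,
  7535179435635529990137823573964813136053523529182595307755009161720988413623427085477532026439694311298541336267282337987334556575303777480479234234252171182666146788405022732048347414668528292414364432244204845323612795992800534336855884536663554158140540292377244415219632486,
  7062033521932042485888230471875897045967503236331476610144010499463066149461581233300121146797520525,
  44017351150, 562123589499385014201589246686968148,
  4539456382602144261287113387153997639760332605119544971589999,
  3664145360136670300242258813854992704415577449621805665341070782168449554781096030198689011364778561941815096791,
  10287263171917496768251804960246662569836882184743746024593092711375202798156143]

def derivationChunk2 : List ℕ := [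
  101983048216741, 5858709, 4209783655931618027561129432, 3033384431508852101378,
  207923829598799464613654399160511, 964541891717830175592320881798771247444, 8415235,
  12394526886064482431538712, 1050020300807062654671826905373378333620539285346693985079,
  2661155866364207286052468247303816629450057266709860386457, 5957039, 6276605,
  472908226747417564317215074847519736858691682299822615974588039832565009545142469803000136145587943892007192048,
  6919830, 12201930775647583837390907422080209811882665045946340881456224972246613145146815,
  4670395817442702974546639943697576623799045882428065278063096325481221272036, 8128449,
  864385189973780074105421, 12498431932638494156206249, 25569781249, 100885533000000,
  278923525642038487834203426139810387914464056660154969283798727541054,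
  31341947738498543381206846250733763697372756335, 104113117253950, 746575407739728191,
  56431602459884469839775089400898858966015191407, 33904679469542, 741585453108307466,
  181051127121412,
  21982650601737156047088399117382583423298427014662443576455637397000835274913849268634148302666064,
  449830276433737271, 51440039417538896183558635728,
  344466355378474009797230303946897938534376672722821531918180092764663700828127627767514061,
  12394558316689924032468558, 451877571782439101, 51517468952090224740688265592, 7120584,
  14453252479550658236774331926868620940259495, 5723508, 99942435328375, 751074767999271288,
  44030277258, 751719239674944106, 4039104004260316338594050874025797351337753650583722981299,
  8775775, 15806910432134799170015451486, 52709835395845, 7640906, 53847520306461, 183984559734903,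
  12845529718, 6441584,
  65951247880342043011782874619553355833019185110841672710000478103620039428091893500308078408055390520318314,
  665276797017975164, 1058686398539573368588795406277403948914, 3065739508980660290660211,
  17607285800370108416601007586174111598959966588, 7620421,
  1059682041488629975846418122342552854317026156171167242318409824940525486,
  4340461091968120021258893724401143503809586717306754999460642487894739191726,
  77546440932359850263669505098156707115845703585769572708929209209509578557165908762913196604802069202505108673408047050,
  486361921948011480797417486676862611112180567731375875631875859897468859650711901766764076491693927772593269106,
  27688163698, 184947710568052, 253028536965364529927641386745960445340, 7383277737,
  705764257068795114659804225471186268062992713948178203483028498737903991091778768699535234060247219451092928285351224597833403051664133205262776186685455224651569873904914292039930057917349522092076022283924412184721976275123394003,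
  6686307, 34229913320814823972788772873680,
  8138250013755598923974696794680596201825623308396159171942521356988743559546159464473945565804464553183034754978244051,
  8852092087944822640098283219711232666779590531709619127621836378172984631581670823733023869980431147515320546652721022182624134590321612567680957067810479572352696000593837236870573514024603240753568529768899179961614194860601410565232993,
  85094569515239,
  2598717643970724490703748256952738792282971195522739028468879165838557611958974838149995805569197531342073869222156633626019481468942282159753622233414219095924896758236059535024265718853473151303509711622945075548275530082,
  5834129, 7833463, 8587731390254556763226635618614436743888405707101,
  659827496242603639893222583594482081552733,
  13015704206259372120189801036326273601087064633699824674984637984720957713926395586830364939973332864666395479557442,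
  167592467523421489769315805653571039809869592247408220826939488322699883193464921185728973149,
  15311188107683086434144650823166695436870178115069940004103534778914655095960170455452118297707030676849258494742514197018108437117353302365,
  207845984586166657143113064318995092449142441519826275468689646613258625881596741063701766935865681068769380840576938139206226509032056973665,
  1060978050471242487334781010197576296797,
  339654763398554297781647716410982552149400819967621893005491989789567557230226878145658749563385649292110719810392907833430117331190286692217435963360431976585820237703035267426,
  7395086, 180349760942669, 5666150, 12772964698, 9119921, 30938599266985715637905759029283125,
  9660727, 578955157704533936582748637018675379, 150743829445242065388790968985164547161,
  28415048947136329726399540257380717, 95831666208885325534792095963397,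
  2003438233047786302360308164635381720952833517618998338765, 155267823446391,
  14372369365352516041378721140182750993528826954905844114345433667590483031487966776461116499585402,
  17790845822132638076050040493224184027055648217799961512339870214156469725527327692333618138381772544738943212678948030108323251292619617688264763376593154359052288222670863308461721372381608608094881572023518141069251656802648289914122913054477001365088816364250623,
  9332968, 499734043559700853]

def derivationChunk3 : List ℕ := [
  158722803002546762812942095542788596516836497660277, 87931306994339,
  10711851330601459091759449871806829, 174253340332002107888741973662266262227721427330867,
  123658131124784816593617598517552495276,
  63854126793458332587833622463794010628283118054360113427663257991088474,
  95594130543682907732906353626097048375018201026000239029837157295438134681950146090155,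
  1572955036184697190613643074357662803474455263954589698206052085517434534813057707596282423485,
  4320032814519257691040264318450967466349920, 175111722096328387338285863826487441339960622699889,
  6589903110976646891211664958613896476127773040831974487926140954165638805227355852511474809020162308007605273172300,
  5108960, 2456439388573113595768724931432622490690223, 707647752797765883, 5178609, 9111735,
  11233973,
  25083544821670116776164699243656345355449375702861637419259412601982326256299027409107480275585774680929655321511678,
  4977853, 5178610, 4875431, 553448608670779747, 9287343059797555682244963,
  11624195868565009428084828814469387448931372, 13894922262,
  1127561490130523237116540440008039812782808350031366261211044524900804781922645385207268907473132943341603171,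
  373848367534196445913060870495988130812624322720174061781031673495683298938409415103646628343318625199568,
  2874210215822863830029550172933949629491327395468517685671513369318831421095003117552400109982637117943006411023592615313236772790251770513201527380756992916323190199014993978777221477,
  34652273741513864131092240551613940503728909462528080630941611510909750329484576602818593480728024311553096231646342500454427297495241261097303127865701,
  27120503156, 28996477691621294432232865675162981428223974656340303350834910890952033713792203098,
  886225912720978939103023260438850508658874381379972801691251167036979911, 111096955881505,
  1046896099237761696044634691034072217946,
  1405383980320032259156649731072828943615963026355880120259697508212713280028200782670475829472748887110144563678156047508606770971428808748603562080576727080749406,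
  32299880161530288279040712247192236526962172661753918566961011907837563800512152487536377396691273260120370906665808426509482474803199040800711414500043,
  6063564,
  37282279658795458455252823418930411943140938264955946678102760486093061634241185216127749145195045037904602254341631661220577926349299255084887125893265370084297883025904026147209805232843,
  3635900123774597377053888821651437050966297291,
  37389167029213566745272934371637098305134958832374334057272622463051226245474951548907422253456330406285190447616668156148593610512551358685192709214955160953,
  26913320202257043536137556726511443338747744475025219990976661131491121262145075444995131417956616538,
  486414751604830822857048393908767017213976035302012267544396491586508397306488789552746252516918815159933375810400102558628904770769894847122996113149272281721424928814063769043,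
  6506725833325637219369900489123715730915007825749528436256338324887115639208829826804031036078350800272292501976,
  21756506799130433607277216397285640650257916831507191643240009941741790880991843329600499668490949,
  25083544747149609785103294303893697740755152619377883079642452601168453914179082632799142109658967485349454717715922,
  959119288724425667729893010072626406440305041779646980069956197631238012930893514565469082438519440785114824475853546611837760295745012055597304,
  8193476182910778561172668833035545799731380314458744138873933537249711079201460785886498439860547630920677999861055816672717310278587565856097907540,
  214354649303221445332313887999708999895610240048976710513272053769229718059656672452468936416841721349577156475985525798762302996844373764023518912827283990559924866349834616479122627818436545879350281246476626,
  841772362699387622508, 12872763734, 924551147661616055524625157386342450541090427471693191,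
  66565319426945,
  4439327480929794843627504826417245609603502511502152019008302384315731229351252969661529216510684,
  10900458035169631662070865173532311688297384132782011172587687737393984962582043932302625544213547755208847926704185366744714717196448531821386310617517645940502568348380,
  83988871240469860102115138234810930817242660078466,
  8845444878661119942074623178563015290348112222,
  8552377177039078559113626129896986017577577580293058873118304462627140915499738519879052321750781937654796532022782021,
  1328400581096887389203882107716791618506253411366067846845503057503786558462482477807738261974745799738423332020572298260542066378351257271746357398845286907741283708915508992777459364282214161738320505960594240534162820275208086104847677546796579418054550696400779636,
  3486548,
  862721173188691095842948045509834103724572512688819792444399247388546461238253124926797924991737287833293370743519262849538167841587179119694279979172092813646051675745828369461341069508040611778267012148825836224,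
  449017831915583377263038329315667062321002490345945343377690077837055954614002733167656034790837159909208452215127297597695,
  139900988457116137596101334618505214943373924692470221153364823378226684036033531739984205559884613089360224810677838586693891449329438802903048794150581130,
  7960476,
  1414812602822686176482137546500017740613646315040610783540081322486380095536311189729060319636082563943460298515380461603022157010568265496863150013240714494692455220479430712601337792356265940847393857822676104552375738892909259536599971483615873985877555929504251241474221672758283635023,
  25889052165, 617379225582269937, 430808002931168760,
  172069208873354586210217804422214702776328704191412306098127376726883548893914623795017082192080910621257426970180717704065136657749301018650247454260030647789971254534077535015455563954010484,
  5145894885308428919701844426978347784069352308775328286273064401366422940479849960325891261053667204794303608757484213869326720197851053638410283740,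
  85282243320853254167818462900514627995412645024476740195758280949639561858796272733598958369642408020457657031203419503452963479139935402230552785822405241763442669419231604,
  14792472936490148893087890205669931791520043009567122964642152641752670906485292160530603695824033746449178009507557859373417276336586071016561086606242733263382907135095240197896743506784741431714113079397302447490267052877439059628833252702131658229442932,
  10849498710238089926555447422056013591962908311419730088547071526630112322265184987620833310823402123789635098212191416202426087914522858554180325615684496991644860535531832101233949042,
  33560478445183475096895301853847596489765740879696921979792399734145185652269205959931092534741740822644152631845516264452088427163303365306239072851580,
  42181210917, 13318264092106811478501483051570279249443160, 16173528002, 15185638278,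
  11988209977647296991368154739073801158760905532502491270847163604810395502886340195115248013777888945838501765422869330524709825162260260416416008532382564210389182368103,
  81036895935514656783307661238517755616457444060036806891501605224241648318290652583847519220228269431626196245599915083846457878824949324761447,
  1107541910126748676844235875661005580210, 910346615700808879892239744163083301,
  544556245861280528229008032083219377008098867673186523520591454425783851927981353876292722437910646461176710001415721496259217234291452508754219559,
  18239226360463456773956226352096698835677322029226384864871438842082286789792295, 3638132,
  3637470740065843512074668468398269851259508435725619263464907, 877428562285611557629,
  19578871219283544113308782317742249687030993366158332776842932207679546718175067002972624598289822318214958962907263919805004912750986732595,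
  8661061, 4146166, 216338560253158838575550971942298406414129936824498440204753666118608,
  434850733246527866724559991918678117156455360081180204176784882358804788207242470896493937926873798954415610487590065020545825295769894696085715578831159075178978296231842274384149931994687208071695803867,
  4900412681939269525985220557927729867208486787351714008530722566265740991173,
  261303252802642923470944464441152365837880098046612778010229754301245221060584426624631136509796073839803821585511494577787998346079443464663114660190394905836412493449596950789,
  51419244644781905023773810488665352756853856403076640004795679125665431887022146952524270413812280154938360659025836776658144766009342298611523445373401282890390518474289490414646089167779991407360020027729,
  2753439529193876932139513291185679609474604479455659384595605686593845201196150820115399897283665863498670786944073061489634797721508493625841264843071957678302701905,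
  99171166404668178170086158498485864127471744597573487098380075438889,
  5788903345514919589826645582455913981879448683677301445268265,
  1384649780778949853382385085879822334682344939042800849347575678664050776839,
  4266814137745135960108821228183903255116122,
  10083603122266318133459748800238889769034792801777427108782959661500662623092183786475620920164912119250643114757171184172298731881217465086160703793518586198624753925]

def derivationChunk4 : List ℕ := [
  26680410247394928321985195686360312099738641386131622976154534452873060828140337079995538918439155324026833882657307,
  668986496995380843867678282884363249209074985968153115,
  25026664212937778516049757110519171319671698189860111248088857360201917097087264785003665959093766484,
  2777623201341103366691034744600954917064748982026362193064555512667696855422313906438974525771034219421169452452532201936910156207991933995386283534510674491562388665918077937542709095278111516118744517006275256703318542434730626819851,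
  35057572017744115705517430034504683333596183742007522039031745681130980446757724710911125471344387486080871783166434759586516843214258432820963919777746448926067923807286709904281988319803121762497040598382,
  22173837678,
  79922620416235992144740293038234882654469943970985881697868994307272656827295496436033444111255857274015338876085057460291598269403670620123394685063633426388518450397285330686669391007214500756432540585045989750,
  279858190325761611923637084220454354442798256297658865857820194686063781173928631886111599626724015705898206660050413906164,
  69622410110848689127311518516202637239850478382512049012312708827151298569220194110060906840193215798419904225126939222687267412693127579786296124178024824,
  190977848727063263273891256255457796981055404071235146267496238832065347375062409891379277952025362603651755028990853047315136540926430213626275990693474558757618914475864290355330446339967467010624241400060274890044418029721479032019580150159736,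
  8563742916521723822957660651219519606871560139369370438963704179007348520183097587539639319720921063096704904771538593183684733423656779019461071204746552714508081013635811863552307871313443219613768056,
  26091647745688901024426144127512997112563396155720981479625205888085382370044654798935826508193393804811270591117126404209171329882488,
  1169007627499505000826297100051539771274247504093424081350352879316555115,
  73778721437169543443599046751061884187086288343790359660226556080113020851340893010226085043047834855170844919529077112,
  19612693472206735299971378047298589316016191734255401863767401936510038633298706,
  34307507968053583052877364933318354867122294861169006271318941885481597633440283961036221094939122146826487103575039730161824885225912235853654453223706704580162792242927483241442398313979607557155541713086838,
  879463591791857862185639058054568729,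
  185124169323322205211627404755249424665925166156546207691742495456718007968080856123738004661081905402752684216345725218894215459535650889369914284261110462281108799099907045710,
  5940648, 2562699721193649154863370851033562147847470264454587075033047087852669761053,
  1228337235747347120627702568224315848188952417266522126070332652945594739, 6526519,
  1737207288108086684207121721478363947686228017824424035366647463254075155766692854790090923807555434501286598990,
  3324825416113989739090522000981652085113511762573444348248768335966389008951050175266671020693166260553205978517998927130678390914923175998745564274552455628998034477893453602730817946767653136236968,
  27689181608, 112452367176104, 27890549160, 6428194, 5936554,
  36182182297530671513308735738730615228821355803884129187827954791962875361121399509931093288716562057522908842964413040862768296871640545771668526827065,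
  174511897524114965990392762615010,
  7133777984101411717374907210236934222989603334351580578183274887056029602620987310601449895888247850652557181732608025719906051536,
  23850779416305085209701955920672092127379055851091375372730881249537972027088785890351598781819543,
  1233125707922595847124570522827397418768273712917270167065300144273570189, 8013734,
  4249002055193412619866647598748838867677223825102904060820856968123470824870021532428095851628857395013821190801414924012699842899,
  5489982,
  505738185860265344884246929686376949529369523636976605209444955003036588068937807942509817548399634981854813094798116444719441,
  7890824, 18066862383674702,
  15314583115896614795389909369439144007053919092527208045613475443138823781679966859684903359795130342488244901502621713743584316467213818220,
  4795008, 54222194604176811193631842167306647507745699312441117872410131050840721484074403678,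
  1070908657284228339018451532495171495733639829381355708, 95215961957709,
  70448858337661503582816406961724454362224448221833119148831894213,
  13878992477821538826288723770807147697696671845986844509143823104311151808120220281495,
  14524024517712851409034592775436307452860746,
  1423551583100908408565940814596710997462994901468138972745842462374308885122999563504797427,
  707352574511274811, 230187829820942786273381675040105562647872302443159,
  23885527377941798691510272100249321749507210614449611288681139829896022939784743614717818573936380,
  9345258, 7325437, 6829700, 1070908133484062317433138290947092349964710300992718037,
  400720248525585172400770890167340407201670997042704848135908117368242297657871071147838485217485378426582,
  347531566472013145736602877355096537090057585352698366277623795911369113773841067825956,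
  6722970116102201022016563937966171544849415712857860532759902561172495014642844718536122439473743648152320760612,
  9107632, 226773623639402308687206903354581,
  201758052584826140517992855896396084020717122478512694816237419453807473819906113641803294912056529255284127674052563751852519387641466273374078166817015780579747413250134221881361869663915458183864507056681404,
  12079666008705340214314189627040025095204678940074398231905865792087949,
  3342497066956597219320010918989414927045, 2080242994855152463231643379590040113547,
  7036379094607610163353967, 48744427502943778432629058380, 6141402,
  530872307703948184188165370129923272255279808098646345152928531506315773665420666925274239843865055702005080555,
  94156717397819686199644041323876144790404958580584065429435648149855860543675051642931931494,
  7349326623758995695769708714256387438923667368279620900379336223124611736293600695936427670837768241151041465747691803248024717306840374075839049362647124863343,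
  1186821859257147609366491056555970194986147827993153724143895550624679800771084569603785307721,
  20985952835136960877051367664745901956206681945961898459463595799371190855400557432297850003722733479944609237980538132883154963224501188751113599562078308907269206756966695509684609898898143478238979575391931738432209828103339664834865408728710644446213169,
  2181575790755374535100077695148689975413205036479953025378347179693582808769164910937771652825687823881009267984311015416896429181969679752706901,
  11878224551255893977112395537658245384304308307071741833976791292749381950389665176360533709657220445061176523467880202662751180265789683579074529704921093507853532149397030810885359989,
  214612262246642185,
  130045314489585197305844463335396924640829203776754013919706493750589040753932059863292357851847049014355945716010151149396769665472351063,
  581922303947897851407062000135929497775341124957757673749337, 10789197,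
  80259790264070858182031804700021722320518730926559465958368309786776300991189600088075084,
  3805114294879664058993856969967135423081,
  1402279431903126775578871596434213380804954796097281717037620470853697998460970355999974896768648787230902619565694928802761855030173320620921183916418542067715551233167154762140350996230047488682355,
  346830325518540309385671021288303129408458383609246599821843609291760785775328485521779,
  10303124441716889504347086256235273801423341930566130363368413587943417747875359480659247879267933645354816174918655858694466650590271184169901300027961853901627034463,
  198644754402101, 63831316688072064096563036906236059612953687354, 3720079,
  6107812045669401104364257730472055120444774993083437354895510293898219445520751848603412815882584,
  5792412697776, 192635927900551707440199825139964560733945729949003450266406623353169, 8210387,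
  58776699443982856494023325249519447720584235358, 52340427432701, 9054372,
  1423412335397406189909977263839632607493139383790984355879636568241415114747554599236228752,
  6559548443410765207108220, 30890828866230103124483767928230451940689389427,
  7825248484870020096754457961834511240424039741838926647917209201099970785773165098177710917220478344972342028161960328301628533373,
  97833785723398784548121993737665162955057096823816535099316061519973232611113162541451752268476168572,
  3300326514405829089660]

def derivationChunk5 : List ℕ := [
  196713974843609,
  532667334753790729017911190089473315789341819377411772515154396539651515551210150025988738980191724075959031325007320634216607726179855091937,
  130043405448805608531988481677109535580922921297062633230939902831419452142762501925272672757026617265044937878072290834563325738607954138,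
  36946107998538,
  130039514188307462108200958458254930296817431293154825353562176755728639821143933575309240037881260660226406613449235981028292363731769193,
  7751334530392695019455787573665441582986530308742605028772485957896441196042348327420533021493369323201874530014817784230900414267,
  7751329900257272895574573801042846927042217415977383783431211510166259613193574785624010435967367244930619100197151322806488115031,
  5831447515236900145675032487898070612694980709789386432038237623342936729259162287054429364402,
  63834204598477645616743618896439461269582787682, 48352667390,
  23885194087522249970137884487271490122683408504778304841695420670753002581660408534641013526144838,
  38721432699096499218809119101527879,
  6250982110527811193734569087359012012133028969558431865030033847702851058081278981185650343256327609635399611861,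
  3225997, 1197153806805052906744305957864644751193621165606397710052155513397490055206355,
  1721729994360478335277,
  85004150301465276186014479281802872174567559906541783691997953421809344272336749025,
  640223394752561137664039374490180065882,
  319364204699109538171537401531243724712478876987717641715,
  2340215481949507488288109255127183597090010449175450901855198555356739639924677846972511805533398964933851237683657127993467720796389464366197968174720304382037910872644648309607014597610055703073940963598194201475830698623700794005765,
  3272502064, 301442518023234295731201235675385036812050701834473315408073958316700, 12077958,
  5834127, 135711275130312318299732389483756679240931134687834,
  21366416250490796220741176538316383683568641990356306046546541665702594308229722,
  955918255910199277871986341897587290,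
  19697890747666729289718542498993609768517515145154952089636310411866,
  4386080305385430698581349859885834498311099853775360711324, 202423572232890,
  56973259833122851592277269171, 267299866906408917731161876576509862920181439769904081263,
  2931350415,
  661883881541801716088421978470477056564092535406736259703746323193583620516020203364540092398338809328728175554707253857688229512406909398895589149019773604360073554183513172304,
  24084380585173567533344471556316747245200451852284257394184795777515778715034910076002911785723840848,
  15959520486546693869137599120269046875572345825882,
  2603608101382643150907980590859362690038428791601505301271643767402692073621524089156625502662222219206020625198268587055397294275687947185956865854661705877944692,
  3896364210986658977526787701201701422794259348,
  274532148801385407172167965153230654934474478996915144447448871809594769544741310200296079853278663061732061143450486207914050607453895747029849188738300129678915386937152118704770275712303178922607414555994967523216782704171269,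
  368119458983505579199277489308569394477534514418472343819010265977778946486436985794692327514947823970640,
  14476502745668183212946109094490,
  462005215306091469354355859491291928034950111098692425905958993296995552016248468733200748951636337185006474161661027912048,
  999863534310743227202151427023998068011177, 6288894,
  1423643339019006375492617813310320667924356834209421864036655834430838866462895575596991911,
  357651569547130034682923740152545991405299450844428848200836318411682605584168500584823,
  456156910323367401596319522992092862, 1030243075167552417037251180992284129759841252204640611,
  73410340393516, 1445795813865427527863209750999762725604425890353329392010256503368554000940,
  1684509293135119625993603963, 44202113630, 261485106886531425596647166828042791436170294706268,
  5057857554559022803431491112077772634886709818918376392843811534294390475242,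
  3374053228542254368724427794825713369235859198767169045415492787969098316141304421843326183797010462736112724316866072552627868128854544495462801097386817603829269816514621945202368232173289631071004112761239863490930,
  90041243631915028278125460708115325661733826956943056041609321832725728283466891997359267164475708883,
  1134353199263493606795138025830804889360417801583457410151481175340548145, 12050977,
  138299189008484434677493752243244950457962152510492611578986590603946111883675464233284420577825151534108023062142502285416915724011155655755676706681477269035450752048243916301394585677757596211570,
  3471524155065123053202522113390224028234288334711809177008298779970933910898455926620848697693960624418019315353512869156452097380766557148546511322436643498639306096988825598462876265925140607618972018,
  26382259816405932,
  19305739041949738783476004401336066030105516992089207767736434464850972155664751,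
  461900538781071589045153122628487009471338662476437327475858497489204485321868473052564594995739576019227151036632729741663,
  1641357518796576855085417848322175752011287756195491263553494498409964532097401953477206162145655987897784721,
  928776221934099660076533324944595434,
  1469719322434518327507824726956319276269714917938400434728906422159553898239574976891716745249293141663981614451380317342918435772071969699508525328199430925553924,
  5685240119388,
  347579884531084445758265895299555182466969165028144121715330117507132298969270101911778,
  6056525250023244176904942874092688087292244,
  330932847387268233868660288703598644946634115123512638311185753933440108, 3330862, 5793161,
  6551104, 6448677, 463983557952860425, 27952940665, 112571094918759,
  189959086169712591940814660735313299844306678456011576890433464220923247798820594922976,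
  252204961630643146, 10705234897414281705781391185677167392991582,
  15583796319296497031901611610575569163295081, 196695419163763,
  6282661675463658765706664337314245722564101679945477149079283491466967964903465648536697843945892518971621538112721153742444208761680944615775900625242511216580839020863999453058464774138849849609031137383912046870617627908132479793932639540462988042791539085590718248180047,
  529177539816602279922874438450221224932045386375564303194749487641063231527871321932891961674960784576428201978005174187541960649147789672008015,
  159450299158586807248853328621208194052666778733842180059949704905137369958790762263616957114715170058364807944623970262218828917315998366537896616663935728580,
  8246107070,
  560918352678050173636622070443814303009947539459043306915907447690769783819335746721992684197038057122597409828886022239468990626804766115689943999753580075363,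
  12183341, 928432,
  569026425250308871526010528680257797684232887840816044453860324809189764964440843859378587,
  149926383046250094142597270668541613735107668723633670848311804049737546645760692282091753437046715159836440920005564024958825202208727507743315375567383264,
  38325157535932159571114967230440692724470221583153878291603525740010017536708892019799911858153457372317253916653707617971767227175343335782257418699578,
  156979845267178125602060663628232910201696206033797381080205269021039061185968578639243775152393199302444340707490346348534843382218628617620338354586626784,
  4594010109342503784828676057815152396902460339415269972939,
  5831487087803427538899966852059836016283786040999139927332858058603671751429316022625453352157,
  226752167069497648059178836965737, 57602163083614,
  73756132260129310122265892001319553748140363215421432207319874932410191536800141554353881210989895676280814917440552994026,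
  36265221724864927616252174440098, 16458886757712587163209022596227558529083873]

def derivationChunk6 : List ℕ := [
  261455491770876644253844958171862068223981185033385,
  32478180798590609128850624676094187690259087855253040570194601061219083566080629270058403248226426915049666160576722110607241238313781092696517691519147351574633417673170445427137538394281792234089566020535896044501941419151766167252105814970043683297364767222731880808,
  72405286680818950889383907896972792289331056608148648524095374967,
  64675325014829019886999386696862525318051906632770122276905130067865935536958712373648031471536937541085525754454460063415404402713802901582856668925714514065464054065662387523231337521481791419833341262090115359504168035560,
  49291996165889304422314885699947902673269630004304881527427897909257730363441761331521741214417658975921609781398199165307148957767109531225502725475825191476474861230744002316593392623450544320631063179256732906228546376972619285343724060858087811007040959056980896195225471967195365475848367038479776971804488863355720110825732812027153030306340189197151094550976,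
  273668014238271009775432596657196231512454121478625, 181019266394593,
  5360649443153288863870789363082332885383061207475412936863273903152190883050,
  14168063489192120963871420,
  157601712329652498108187922924728754349344249021821622532963055997126326471649503050084,
  461950949851153328848167643503396221361695759757288346881564398630690433136745615231832964981031798718375105904811546425719,
  1684874603565555725889759577481259016670041819160954648385717699771199165793963203168700569204348110725238944853816967674510445637128413567718934,
  12460296061140268073876320874656175384876718411310014438998981617611370886960546228136392493946126842958187242903835,
  193255319217022,
  1026033105246767407330506876257640859431120443053161195184938509012472091923511691115449321590680542,
  12572937513397619651610240375680112670409329643121361511712864784617226147123745833130601496838848544229901844535579,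
  97814765817772756681165338909476461193785144004755408974904553866359660874305753259696581655125281097,
  1715490206512431667433610882136580413997545508459399348751427364144975590332845465131657153448158301477514778967,
  2436010387259004969020511793176719213637305465832937901700876421492614070404008933,
  9617030657820689858801814424335333672657417295258742266669957144620,
  243681012602897513751866779393847927780146406183483774603343751804094134287562312479447678839632964546006126728654844433018913549813415112555234570262334252615768030402579848425273405915431360533720472596876263,
  137925752347695925016986841181759769785794304284426955315153538447682648627503253146327244436909090141957672325118554439606746551617368955,
  28820607055661692487421866826726513592465906747249040892740883727784311802891124804929840578815155283145553639160803,
  2007089181840991421479828636767043893707200259978727540085865460313844942488472417342507742023199770550589432200309594525635308,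
  46597641975,
  3214816347861977211410691407270709740922375879637913609567108933320504444817510341334712823435642262803364372998104164068402781904418729204630386502317846409177975297654550740236441204765311173211287535853605339149293754415473,
  8712642698399634498487039805370802369074099794107830691400918115131,
  22334721369057026890720006420032909186777018166591675234109723978041348432975295180191602590048797527554429311244041749267943453169020437056251877844750069850870253195823409443889431562607902332007487306356570842485698233302715392581643774007552617106887969099,
  5123328874953911341635063275747294525024879760359549743736308783626809881356082978327950737927990563066237830546200974272235859456838467818154066895233151578825791609023745869887154981193813251183811931556212060907817825830840172587983830961972718303040,
  9761128397520751806803906587762263693245101175970543769208246078096308720970202942247085458635393355,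
  13518444655402448810740080, 1244618190185974629447,
  461991066232724226776648123371782669295350746236620062473700016759890375835778351370134237931211223634363157957643366132087,
  26180783997606177806484673002784603410008930934114192526549266714,
  928983452933423004085715476062361968,
  164380925108957871402957301155829203837601861167030708665326449700360720800749873071074536918675369301524092707162365583807,
  6257655,
  4241639084192635722765058232295413163973504365392774728916641260626852613608864983193443090113371867023624549586882037287498726263026467406017820441970629596308464722938982046936653720202516812551509539388086380264446135628519513980630069944483213943941869665202339242890231591112266890207455695317277336774954200794429593516749370214074220695397393690786040168,
  12418176408534872461534941, 740181018117146993,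
  22800052129882705413909365225818926361500108683953877708845336174498132920854587561769337415625815836846942750257916163650461558751787445896102442837251423970385797676171699330764076633973332063513708809291258490203370199736943673717021632168374926279912875656641702565224552805259368658707312691844322298508313479647089503042304928070269148426382491435148301419162235895734953753459876325925745491815851726781384613005115946157743194762999663994286212047202283668824500906241090348300133920941127570336108,
  8199144950210419474250192278178297473183554199799346173539281757009140593389013137662563183187314082922488143885798209251114675437411075683544022219690714421599045005333749119494769708324678636147168377462968791302315539831568203817564008181401970570245891887878357380469111945546182871216544300851376245976515687373164427256179514193588791062314240241116652246097031352250046600,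
  843385362998792546, 3250362018,
  51567468742195842354028322417372861749813456374983185319374534098574885605863407280347170791782263226523158098339691513856647092516215626559561037820328778857757719746681797418967407452506,
  347584856520367916395690258616962227308340586655594285233573991116439020621491836981634,
  614131325592392087186959889316238714908861007721156903472910141399968506311432901137506482489419413705514403979673188250992639319702933869832834206890965371875,
  4444457049858793538206236119285714062958427046409040303055771267708059934649800889306511207541684764729650746657570425690417035508204027909838962097015384595487063113295836826744187420530678371212475141625366422131399859795553597573492,
  60220727441297393360647661435782007340881031703432674451805693918652178542549452759855533463802236235640269173208186943631553690818030645378773206943031355515567688233526510462896293285245922440698734426450,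
  1024051783675959089125053667111635911412759137632128929038562764669478281469861355977984966760104702289726045124860458400142331563024384721639762,
  2972596915,
  400658460337188793422487705905385331608215350437947553469923126227165236213956527901535211964931423509161,
  1437638730352281208386698336417306210956930166849875261527243372103889990202055631473546801538,
  27807602119134906917774907984124439995547610123403381588114202730971150277768271426075581605872716564505770059215530911,
  128442133404324991079195416789479364332973661103508857082741095814833601607929207932973178247426480846160765736491136835819033213512502790308258668343709586824616960020136577493574610950113536215379910780210406364401944954910857922683,
  18839810805797335486078487845297459139039920507163133058309565439,
  904050191035955978028742614927604503316598790234142071681974,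
  798142663209341035054023311698457986846959504233372392870782455310531016119120207812201474191549796975708811,
  607241806506060881565877610655439330853310952237890051662395850752282257860391966815276104594540822710203167553031688999006849656946098854394201,
  10301509,
  58695030250008956252458290671756885258689909513022899714395740843950524553065123767054781838612428172027582172295431009789118216697682851334502,
  9046145425, 83832394341535683637161721196580786062471700368204837748546808976736,
  865035433736142571213226231291904113078489807829992803, 45938616540,
  849695512550715401147947964893939630234958998516667744,
  297832494102415166161414712150615496535658821280204131,
  20253926843504092307263145004049604989441718535917208520889874781, 130796303288669,
  22923145802714067800185666189755953989539589207748358297983582492170103272956867484029977381694399368664727601246111830443214923765369600345,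
  9169087,
  170708842246756842151956879327128689318782442320057724370060643144083757974893047132510493272477503637071076531115477917521923871071723244419607555312689252007,
  7657294, 9582884,
  461931352414455099734847245064749080018282741256126482003733991346042782474774564292123702013197928415327465068556568033488,
  130041710570243812358462448227198246784391406678556596943805132588768286946098878724760410565978654715960537300723072545607995560500721872,
  3556419623299481577678, 294733426467555969910788272852806725987958218038279193,
  71889559528470690308818054086592603142623876447257, 45447377723409915027150851097,
  413765684867596527697383515133628495694891185240364281331919585080893068280545545179009960549416773807955217421576001014809,
  8218583, 4719745,
  7415488680443601763646234674156512676214760342015916961603368195070487839898218935437633944716140,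
  9578787, 16794234396824248739875454129017969342966817, 186122187643130219987835165022512,
  6019362816644646574412237740719329520795586391793857318776195318487045541792734785650055522205072621461367274521,
  614104615369503788170496546564704783289069214837101590862254987393063910787443287657913584236467750952161858606901034144188305100290402509719940004007400765648,
  21391184926221836732217103683302945550724942414391109696623181123561279621853607192536193152044057,
  10310821720670861939926006369960080920736688381967504434061271128287896217990327132240974398067642,
  4288935836931564886028666841899507372907545,
  172818622435743015117779033946999800196721454752981989439238578877026088460011261562480688120934310069998870795239053713234513800372026832731897569121029828793597552107522255,
  12781728, 1633090608,
  311193785526047490619476266580329557685253408307508486081816710918466699170299630514540,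
  11875999085905922159140215095741254580731477599905463468581287879944552226818851369907120139736679360733868536057071604353633290612107896946631711551257255012315684631061517646961641679,
  9574690, 9238736, 9509139]

def derivationChunk7 : List ℕ := [
  149895495296708277431526389262005408666406637344625598541765374255257634339810519148888713223800895425530632195283310326502687172007018500785238991749265668,
  526698347932790123805422929111759434037326760383424446481788365669978574620867703157860892462581497971360336805684080379677721,
  42181825466,
  1251008764779848444565855743220698439939404491959687722841878500931949486849694485326524125831668097176138248935434815418758646658461924948693478231639054516924075425290027422409207624907474814849346453615610944889094501281976696959603712459147327748,
  12831797, 868284168457804644,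
  1351973147630626415153431666216036911896762676185921183125046551190809446,
  1423719644383657352677129315953490988623220647059329222104610589091009317377874749670967637,
  3613263896808836877230, 8349681, 8259553, 8337394, 287761370505341671258,
  7383083032386352849133822653775, 69855499839848, 215415612922944,
  214750667065183151154804519504001, 13518330572501963637569915, 5682541,
  775311051812129937546887281230793791829779884215690709436863370679713920638603045386842806464517501133902093884596118866451879298264303281998311290974410263991269407983938081804,
  1172619307542475817960713638894795156222993073958726476, 9472265, 762886750244271387,
  52590091062,
  97837269029019071592760148677308034619702666471143950535302488734761662346672099150535763454816213333,
  5831555886925832926207183787144671543408448957285855135458092182303549553399873454324774353237,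
  3613287886312226730552, 5264646, 9423101,
  1352168468218064988251264557493566496977943006140140782069785352414135506,
  123498046715267263894236032355477861670662933734383789057816252954075265882736011394045765281892459450169316920165071213,
  92906164695238091497839417245544169092038237163325148942318281559581981960860689603, 1996745596,
  5538535674210130890687573085179780545490311612954074506736951489213275242849,
  92921209329928992814458253116244885047976279289615449998577355713110316440479996464, 52591705032,
  10681436, 84860307463698759081002964115297840339908786618392547001138006341551165924072446428,
  286342219336235516780611324045371450984172557951182,
  8698609849895772510696808014028136585751088584118319935855378,
  2315927427571868747067732505228834446363994295878108116573661345023626807612,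
  1423719716775652726764947485452371549713205897876077330432708448597150320532468319852669301,
  84860307974597081345373064089692916761404017105254582533143193489868121636168153449,
  2666869880994806534731222551349251999806279274963234458360857870198508734487908702464504970041,
  29195942724652837323642036668588158066357483866, 248362218892452338157282658802595, 12867386,
  11528876083412890967109356223634574092839564776123286955415855,
  1188354633362142527136676606226952985864820775407778886, 7759720,
  14758845329907205733695896065285528346860648, 4202642486044069375353018347738289649475,
  53359396733, 214769466109387660189281228822368,
  614134513933404685158250753503065945834257013536288231689840677869228374161264021277475343670404937496641165136869362183236431200815837632611080863674466494384,
  97837273950963656256266631416108684792049351524034469682928889985214141795452600914629426346210062575,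
  248362217820496334279981981244488, 4803134268962846959848162285536141737430846529414035836014,
  4166823669824963864691451513255422665321, 15586376836739196830811908579862532961323369,
  4387175057606920788833571238625992600261784665517285935465,
  229775002041288502377980327641969646078615028533539690070905029686880137011586699320761147034658616102634442424053527831586661199602944315463808394747716692493443262040042483281280192748727635466841060553767273,
  53481954422,
  123487188454566642377170469145345233254410447711632693433297811689172486582932997222868343177135428309446604075174492518,
  19676731831721456817236395137469264965756030444747836548004601,
  17067327049257933446119376097400370078646886,
  1172857784108659143366101775054281938028969641749466207,
  347587821434478768610048986651707963930613612732337784021011220379015418758390003176574, 8878200,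
  17450603538, 219782387532818, 186248189248586, 882148608707869603,
  1017291639808902817026011046633233253, 3124723004812919292989, 3125318886933093663372,
  762872728048435309, 3673970755962568704655, 61639003890417673702302032963,
  15049104156714191773058059, 15153025774709331760239627, 1258337286, 217276100418698,
  3613412284566102626862, 3614160163510067155505,
  292006487897188051704299850564305584138032452787302, 882360676956647989, 3649889337331755179137,
  5057807970054897338103769418899048169655146862840398939630942196601208682596,
  80598487102924143392814040595381152948099699499095818089116109360,
  5831555909039296173524085983749468003184272864018806242442768409865022737439114998275084118377,
  347579906747870068961093743266574604882583200569926003252759049533465844997346356550011,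
  22686464323872573104199553694910460046836365446618155595017213973209428950690636,
  60983364130702092843041500308, 3614146870139517669997, 13204630,
  4166823428640471681749967926055091626959, 196694390864233,
  4866789896282831481611200029350463090548101425621263134627908571621351158490586553793774722251348410091781452782991920163853452534610151860253255588014480998020370459352613649067091027921575233159188370482949266677132134099528803465482,
  215367893250613]

def derivationChunk8 : List ℕ := [
  46204376520354123287320357188255453781557337426742426912535504463804294428333896819946389339075183863289383024016658248219674125813202378500653079160042883699027024864631,
  4166848188531184066017670411782586862749,
  218234415514653352529995921299921291937016283752440142325051099754512762401321725179703847923672470308703111585764773553892598593221227684552593022080284661096832331681372002797259021174405454,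
  4166827840282978180510742570981025766516,
  347587821434477955502375321798256441580501508546966960976604794715586514778930318666089,
  12967029, 3645191524094707186850,
  1352212540486971476498489705689789068292566968149149523890190671778057326,
  4804045684709440157733219872923660838090201190051933921768, 911075485952859295, 222430245770191,
  217276619394214, 3736376750587483323551, 17649322100763894803476257543005843985126178,
  7751467452725457477856613698397453768487135035397636052664607153138875082363302010057018438990592996170381843960295429897227467946,
  4387174814517246826611250058746270348887105392924215007884,
  3343666385882117709786196122014746617511660974736975529558485048239664186219927386831099717504612865657032926829164645440308721315258912826550055517980881863787720647180919725312309661362015047952764,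
  123497215628203461554438083159528974597438005510738867965514452423088199436923625614312054486822695494310302366735370605,
  462023457004492175135732264604705756610438108300937501488838237675478667630006300269207537910595585848288096164444225014123,
  153359202244788, 1017291905939592067377807102164536162,
  92918643008362208851140521638638884758673368937563877330713073970050817904495606096,
  4166731183259382587469204010003009509936, 8726621, 8296426,
  7751467334034350702519671515256964349964676741494480554096567158325978518738840380707480526974631312540008935388788802583670007801,
  62705385133487268411658144330,
  462023463151510631884999530295010290209748851603732511931073310629860095925273198643464097073403789877012344407420076791802,
  330132052179732105910124291750244760737033953288171667215919727093046,
  1172798159258186993449508325587939810270710418136852954, 61154503315706984461403716673,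
  27538744460835568394962884769611583877616223609940451930835068621486758076299047561323156656942324063088394646428021,
  15396501180330686242538812, 258346893237974055689396265927631, 917832588033645367, 13367761,
  13368409, 17753466589033662148707170877790724660363348, 54707098976, 54707107169, 54824519016,
  224423932864781, 224286443592890, 918677685188956615, 224286443604906, 224423983226040,
  54757467426, 63131021484521769886773197999]

/-- The derived clauses of the refutation, in the encoding read by `addDerivations`. The last one is
the empty clause. -/
def derivationCodes : List ℕ :=
  derivationChunk0 ++ (derivationChunk1 ++ (derivationChunk2 ++ (derivationChunk3 ++
    (derivationChunk4 ++ (derivationChunk5 ++ (derivationChunk6 ++ (derivationChunk7 ++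
    (derivationChunk8))))))))

/-- The refutation is valid. The kernel evaluates the checker; the arithmetic on bit masks uses its
built-in operations on natural number literals. -/
theorem check_cert : check premiseCodes derivationCodes = true := by
  decide +kernel

/-! ### Soundness of the premises -/

section

variable {pt : ℕ → Fin 3 → ℝ} {ε : ℝ}

/-- A plane with a tetrahedron weakly on one side has every point of the tetrahedron on that side.
-/
theorem orient_nonneg_of_mem {a b c d p u v w : ℕ} {s : ℝ}
    (hp : pt p ∈ convexHull ℝ (quadSet pt a b c d))
    (h : ∀ t ∈ [a, b, c, d], 0 ≤ s * orient pt ε u v w t) : 0 ≤ s * orient pt ε u v w p := by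
  obtain ⟨α, β, γ, δ, hα, hβ, hγ, hδ, h1, hq⟩ := convexHull_quad hp
  have e : s * orient pt ε u v w p = α * (s * orient pt ε u v w a) +
      β * (s * orient pt ε u v w b) + γ * (s * orient pt ε u v w c) +
      δ * (s * orient pt ε u v w d) := by
    simp only [orient, det4_combination h1 hq]
    ring
  rw [e]
  simp only [List.mem_cons, List.not_mem_nil, or_false, forall_eq_or_imp, forall_eq] at h
  obtain ⟨ha, hb, hc, hd⟩ := h
  positivity

/-- By general position, a labelled point in a tetrahedron is in its interior. So it is strictly on
the positive side of a plane as soon as the vertices are weakly so, and one of them strictly. -/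
theorem orient_pos_of_mem (N : Normalized pt ε) {a b c d p u v w : ℕ} (hab : a < b) (hbc : b < c)
    (hcd : c < d) (hd : d < 9) (hp9 : p < 9) (hpn : p ∉ [a, b, c, d])
    (hp : pt p ∈ convexHull ℝ (quadSet pt a b c d))
    (h : ∀ t ∈ [a, b, c, d], 0 ≤ orient pt ε u v w t) {t : ℕ} (ht : t ∈ [a, b, c, d])
    (htpos : 0 < orient pt ε u v w t) : 0 < orient pt ε u v w p := by
  obtain ⟨α, β, γ, δ, hα, hβ, hγ, hδ, h1, hq⟩ := convexHull_quad hp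
  have e (x y z : ℕ) : orient pt ε x y z p = α * orient pt ε x y z a +
      β * orient pt ε x y z b + γ * orient pt ε x y z c + δ * orient pt ε x y z d := by
    simp only [orient, det4_combination h1 hq]
    ring
  simp only [List.mem_cons, List.not_mem_nil, or_false, not_or] at hpn
  obtain ⟨hpa, hpb, hpc, hpd⟩ := hpn
  have self (x y z : ℕ) : orient pt ε x y z x = 0 ∧ orient pt ε x y z y = 0 ∧
      orient pt ε x y z z = 0 := by
    simp [orient, det4_self14, det4_self24, det4_self34]
  -- A vanishing weight would put `p` on the plane through the other three points.
  have hα' : 0 < α := by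
    refine hα.lt_of_ne' fun h0 => ?_
    have := e b c d
    rw [h0, (self b c d).1, (self b c d).2.1, (self b c d).2.2] at this
    exact N.orient_ne (by omega) (by omega) hd hp9 (by omega) (by omega) (by omega) (by omega)
      (by omega) (by omega) (by linarith : orient pt ε b c d p = 0)
  have hβ' : 0 < β := by
    refine hβ.lt_of_ne' fun h0 => ?_
    have := e a c d
    rw [h0, (self a c d).1, (self a c d).2.1, (self a c d).2.2] at this
    exact N.orient_ne (by omega) (by omega) hd hp9 (by omega) (by omega) (by omega) (by omega)
      (by omega) (by omega) (by linarith : orient pt ε a c d p = 0)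
  have hγ' : 0 < γ := by
    refine hγ.lt_of_ne' fun h0 => ?_
    have := e a b d
    rw [h0, (self a b d).1, (self a b d).2.1, (self a b d).2.2] at this
    exact N.orient_ne (by omega) (by omega) hd hp9 (by omega) (by omega) (by omega) (by omega)
      (by omega) (by omega) (by linarith : orient pt ε a b d p = 0)
  have hδ' : 0 < δ := by
    refine hδ.lt_of_ne' fun h0 => ?_
    have := e a b c
    rw [h0, (self a b c).1, (self a b c).2.1, (self a b c).2.2] at this
    exact N.orient_ne (by omega) (by omega) (by omega) hp9 (by omega) (by omega) (by omega)
      (by omega) (by omega) (by omega) (by linarith : orient pt ε a b c p = 0)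
  rw [e]
  simp only [List.mem_cons, List.not_mem_nil, or_false, forall_eq_or_imp, forall_eq] at h ht
  obtain ⟨ha, hb, hc, hd⟩ := h
  rcases ht with rfl | rfl | rfl | rfl <;> positivity

/-- A point that comes before or after all vertices in the rotation order is separated from the
tetrahedron by a plane through the line `01`. -/
theorem between_of_mem (N : Normalized pt ε) {a b c d p : ℕ} (hab : a < b) (hbc : b < c)
    (hcd : c < d) (hd : d < 9) (hp9 : p < 9) (hpn : p ∉ [a, b, c, d])
    (hp : pt p ∈ convexHull ℝ (quadSet pt a b c d)) :
    between p (quadCode a b c d) = true ∧ 3 ≤ p ∧ p < 8 := by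
  rcases between_table d (List.mem_range.2 hd) c (List.mem_range.2 hcd) b (List.mem_range.2 hbc)
    a (List.mem_range.2 hab) p (List.mem_range.2 hp9) hpn with h | ⟨-, h⟩
  · exact h
  exfalso
  have hpn' := hpn
  simp only [List.mem_cons, List.not_mem_nil, or_false, not_or] at hpn'
  have h0 (x : ℕ) : orient pt ε 0 1 x 0 = 0 := by simp [orient, det4_self14]
  have h1 (x : ℕ) : orient pt ε 0 1 x 1 = 0 := by simp [orient, det4_self24]
  have hx (x : ℕ) : orient pt ε 0 1 x x = 0 := by simp [orient, det4_self34]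
  have pos {i j : ℕ} (hi : 2 ≤ i) (hij : i < j) (hj : j < 9) : 0 < orient pt ε 0 1 i j :=
    N.edge i j hi hij hj
  have hlt : ∀ t ∈ [a, b, c, d], t < 9 := by
    simp only [List.mem_cons, List.not_mem_nil, or_false]
    omega
  have hdmem : d ∈ [a, b, c, d] := by simp
  rcases h with h | h
  · have nonneg {x : ℕ} (h2 : 2 ≤ x) (hxt : ∀ t ∈ [a, b, c, d], t < 2 ∨ x ≤ t) :
        ∀ t ∈ [a, b, c, d], 0 ≤ orient pt ε 0 1 x t := by
      intro t ht
      rcases hxt t ht with h3 | h3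
      · interval_cases t
        · exact (h0 x).ge
        · exact (h1 x).ge
      · rcases h3.eq_or_lt with rfl | h3
        · exact (hx x).ge
        · exact (pos h2 h3 (hlt t ht)).le
    by_cases hp2 : 2 ≤ p
    · have hpd : p < d := by
        rcases h d hdmem with h3 | h3 <;> omega
      have := orient_pos_of_mem N hab hbc hcd hd hp9 hpn hp
        (nonneg hp2 fun t ht => (h t ht).imp_right le_of_lt) hdmem (pos hp2 hpd hd)
      exact this.ne' (hx p)
    · have := orient_pos_of_mem N hab hbc hcd hd hp9 hpn hp
        (nonneg le_rfl fun t _ => by omega) hdmem (pos le_rfl (by omega) hd)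
      have hp01 : p = 0 ∨ p = 1 := by omega
      rcases hp01 with rfl | rfl
      · exact this.ne' (h0 2)
      · exact this.ne' (h1 2)
  · have hdp := h d hdmem
    have key : ∀ t ∈ [a, b, c, d], 0 ≤ orient pt ε 1 0 p t := by
      intro t ht
      rw [orient_swap12]
      by_cases ht2 : t < 2
      · interval_cases t
        · simp [h0]
        · simp [h1]
      · rw [orient_swap34, neg_neg]
        exact (pos (by omega) (h t ht) hp9).le
    have hd' : 0 < orient pt ε 1 0 p d := by
      rw [orient_swap12, orient_swap34, neg_neg]
      exact pos (by omega) hdp hp9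
    have := orient_pos_of_mem N hab hbc hcd hd hp9 hpn hp key hdmem hd'
    rw [orient_swap12, hx] at this
    simp at this

theorem sat_ins (N : Normalized pt ε) {a b c d p : ℕ} (hab : a < b) (hbc : b < c)
    (hcd : c < d) (hd : d < 9) (hp9 : p < 9) (hpn : p ∉ [a, b, c, d])
    (hp : pt p ∈ convexHull ℝ (quadSet pt a b c d)) :
    Sat (valuation pt ε) (Lit.ins p a b c d).mask := by
  obtain ⟨hb, h3, h8⟩ := between_of_mem N hab hbc hcd hd hp9 hpn hp
  have hq := (quad_facts hab hbc hcd hd).2.1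
  have : (Lit.ins p a b c d).mask = 2 ^ (512 * p + quadCode a b c d) := by
    simp only [Lit.mask, insMask, hb, cond_true, Nat.add_eq, Nat.mul_eq, Nat.pow_eq]
  rw [this]
  exact sat_two_pow (.inl ⟨by omega, (valuation_ins hab hbc hcd hd h3).2 hp⟩)

theorem sat_nins {a b c d p : ℕ} (hab : a < b) (hbc : b < c)
    (hcd : c < d) (hd : d < 9) (h3 : 3 ≤ p) (h7 : p ≤ 7)
    (hp : pt p ∉ convexHull ℝ (quadSet pt a b c d)) :
    Sat (valuation pt ε) (Lit.nins p a b c d).mask := by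
  have hq := (quad_facts hab hbc hcd hd).2.1
  have : (Lit.nins p a b c d).mask = 2 ^ (512 * p + quadCode a b c d + 4096) := by
    simp only [Lit.mask, Nat.add_eq, Nat.mul_eq, Nat.pow_eq]
  rw [this]
  refine sat_two_pow (.inr ⟨by omega, by omega, ?_⟩)
  rwa [Nat.add_sub_cancel, valuation_ins hab hbc hcd hd h3]

theorem lt_of_distinct9 {a : ℕ} {l : List ℕ} (h : distinct9 (a :: l) = true) :
    a < 9 ∧ a ∉ l ∧ distinct9 l = true := by
  simp only [distinct9, Bool.and_eq_true, Nat.blt_eq, Bool.not_eq_true', List.elem_eq_mem,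
    decide_eq_false_iff_not] at h
  exact ⟨h.1.1, h.1.2, h.2⟩

theorem plucker_signs {A B C E F G : ℝ} (hA : A ≠ 0) (hB : B ≠ 0) (hC : C ≠ 0) (hE : E ≠ 0)
    (hF : F ≠ 0) (hG : G ≠ 0) (h : A * B - C * E + F * G = 0) (x y z s : Bool) :
    hasSign (!x) A ∨ hasSign (x.xor s) B ∨ hasSign (!y) C ∨ hasSign (!(y.xor s)) E ∨
      hasSign (!z) F ∨ hasSign (z.xor s) G := by
  by_contra hcon
  simp only [not_or] at hcon
  obtain ⟨h1, h2, h3, h4, h5, h6⟩ := hcon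
  have k1 := (hasSign_or hA x).resolve_right h1
  have k2 := (hasSign_or hB _).resolve_left h2
  have k3 := (hasSign_or hC y).resolve_right h3
  have k4 := (hasSign_or hE _).resolve_right h4
  have k5 := (hasSign_or hF z).resolve_right h5
  have k6 := (hasSign_or hG _).resolve_left h6
  have mulSign {P Q : ℝ} {x s : Bool} (hP : hasSign x P) (hQ : hasSign (!(x.xor s)) Q) :
      hasSign s (P * Q) := by
    cases x <;> cases s <;> simp [hasSign] at hP hQ ⊢ <;> nlinarith
  have m1 := mulSign k1 k2
  have m2 := mulSign (s := !s) k3 (by simpa using k4)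
  have m3 := mulSign k5 k6
  cases s <;> simp [hasSign] at m1 m2 m3 <;> linarith

/-- Every premise holds in a normalized configuration. -/
theorem sat_premise (N : Normalized pt ε) (A : Premise) (hA : A.ok = true) :
    Sat (valuation pt ε) (clauseMask A.lits) := by
  cases A with
  | gp a b c d e f x y z s =>
    obtain ⟨ha, hna, hA⟩ := lt_of_distinct9 hA
    obtain ⟨hb, hnb, hA⟩ := lt_of_distinct9 hA
    obtain ⟨hc, hnc, hA⟩ := lt_of_distinct9 hA
    obtain ⟨hd, hnd, hA⟩ := lt_of_distinct9 hA
    obtain ⟨he, hne, hA⟩ := lt_of_distinct9 hA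
    obtain ⟨hf, -, -⟩ := lt_of_distinct9 hA
    simp only [List.mem_cons, List.not_mem_nil, or_false, not_or] at hna hnb hnc hnd hne
    have hpl : orient pt ε a b c d * orient pt ε a b e f - orient pt ε a b c e *
        orient pt ε a b d f + orient pt ε a b c f * orient pt ε a b d e = 0 := by
      simp only [orient]
      linear_combination ε ^ 2 * det4_plucker (pt a) (pt b) (pt c) (pt d) (pt e) (pt f)
    have ne {i j : ℕ} (hi : i < 9) (hj : j < 9) (hai : a ≠ i) (haj : a ≠ j) (hbi : b ≠ i)
        (hbj : b ≠ j) (hij : i ≠ j) : orient pt ε a b i j ≠ 0 :=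
      N.orient_ne ha hb hi hj hna.1 hai haj hbi hbj hij
    rcases plucker_signs (ne hc hd (by tauto) (by tauto) (by tauto) (by tauto) (by tauto))
      (ne he hf (by tauto) (by tauto) (by tauto) (by tauto) (by tauto))
      (ne hc he (by tauto) (by tauto) (by tauto) (by tauto) (by tauto))
      (ne hd hf (by tauto) (by tauto) (by tauto) (by tauto) (by tauto))
      (ne hc hf (by tauto) (by tauto) (by tauto) (by tauto) (by tauto))
      (ne hd he (by tauto) (by tauto) (by tauto) (by tauto) (by tauto)) hpl x y z s
      with h | h | h | h | h | h
    · exact sat_clauseMask (chiSound N ha hb hc hd _ h) (by simp [Premise.lits])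
    · exact sat_clauseMask (chiSound N ha hb he hf _ h) (by simp [Premise.lits])
    · exact sat_clauseMask (chiSound N ha hb hc he _ h) (by simp [Premise.lits])
    · exact sat_clauseMask (chiSound N ha hb hd hf _ h) (by simp [Premise.lits])
    · exact sat_clauseMask (chiSound N ha hb hc hf _ h) (by simp [Premise.lits])
    · exact sat_clauseMask (chiSound N ha hb hd he _ h) (by simp [Premise.lits])
  | sep p a b c d u v w s =>
    simp only [Premise.ok, Bool.and_eq_true, Nat.blt_eq, Nat.ble_eq] at hA
    obtain ⟨⟨⟨⟨⟨⟨hab, hbc⟩, hcd⟩, hd⟩, h3⟩, h7⟩, hA⟩ := hA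
    obtain ⟨hu, hnu, hA⟩ := lt_of_distinct9 hA
    obtain ⟨hv, hnv, hA⟩ := lt_of_distinct9 hA
    obtain ⟨hw, hnw, hA⟩ := lt_of_distinct9 hA
    obtain ⟨hp, -, -⟩ := lt_of_distinct9 hA
    simp only [List.mem_cons, List.not_mem_nil, or_false, not_or] at hnu hnv hnw
    by_cases hmem : pt p ∈ convexHull ℝ (quadSet pt a b c d)
    swap
    · exact sat_clauseMask (sat_nins hab hbc hcd hd h3 h7 hmem) (by simp [Premise.lits])
    by_cases hneg : ∃ t ∈ [a, b, c, d], hasSign (!s) (orient pt ε u v w t)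
    · obtain ⟨t, ht, hs⟩ := hneg
      have ht9 : t < 9 := by
        simp only [List.mem_cons, List.not_mem_nil, or_false] at ht
        omega
      refine sat_clauseMask (chiSound N hu hv hw ht9 _ hs) ?_
      simp only [List.mem_cons, List.not_mem_nil, or_false] at ht
      rcases ht with rfl | rfl | rfl | rfl <;> simp [Premise.lits]
    · push Not at hneg
      have hpne : orient pt ε u v w p ≠ 0 := N.orient_ne hu hv hw hp hnu.1 hnu.2.1 hnu.2.2
        hnv.1 hnv.2 hnw
      refine sat_clauseMask (chiSound N hu hv hw hp s ?_) (by simp [Premise.lits])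
      refine (hasSign_or hpne s).resolve_right fun hs => ?_
      cases s with
      | true =>
        have := orient_nonneg_of_mem (ε := ε) (s := 1) (u := u) (v := v) (w := w) hmem
          fun t ht => by simpa [hasSign] using hneg t ht
        simp [hasSign] at hs
        linarith
      | false =>
        have := orient_nonneg_of_mem (ε := ε) (s := -1) (u := u) (v := v) (w := w) hmem
          fun t ht => by simpa [hasSign] using hneg t ht
        simp [hasSign] at hs
        linarith
  | hole m =>
    obtain ⟨l, hl, p, hp, hpl, hmem⟩ := N.noHole m (Nat.eq_of_beq_eq_true hA)
    obtain ⟨hsub, hlen⟩ := List.mem_sublistsLen.1 hl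
    have hsort : (members m).Pairwise (· < ·) := List.pairwise_lt_range.filter _
    have hl9 : ∀ t ∈ l, t < 9 := fun t ht =>
      List.mem_range.1 (List.mem_of_mem_filter (hsub.subset ht))
    have hlsort := hsort.sublist hsub
    match l, hlen, hlsort, hl9, hl, hpl, hmem with
    | [a, b, c, d], _, hlsort, hl9, hl, hpl, hmem =>
      simp only [List.pairwise_cons, List.mem_cons, List.not_mem_nil, or_false,
        forall_eq_or_imp, forall_eq] at hlsort
      have hset : Set.image pt {i | i ∈ [a, b, c, d]} = quadSet pt a b c d := by
        ext x
        simp [quadSet, eq_comm]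
      rw [hset] at hmem
      refine sat_clauseMask (sat_ins N hlsort.1.1 hlsort.2.1.1 hlsort.2.2.1
        (hl9 d (by simp)) hp hpl hmem) ?_
      simp only [Premise.lits, List.mem_flatMap]
      refine ⟨_, hl, p, List.mem_range.2 hp, ?_⟩
      have : [a, b, c, d].elem p = false := by
        rw [List.elem_eq_mem]
        exact decide_eq_false hpl
      rw [this]
      simp [holeLits]

theorem not_normalized : ¬ Normalized pt ε :=
  fun N => check_sound check_cert valuation_lt (sat_premise N)

end

/-! ### Labelling the points around an edge of the convex hull -/

theorem det4_ne_zero {S : Finset (Fin 3 → ℝ)} (hgp : InGeneralPosition 3 S) {p q r s : Fin 3 → ℝ}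
    (hp : p ∈ S) (hq : q ∈ S) (hr : r ∈ S) (hs : s ∈ S) (hpq : p ≠ q) (hpr : p ≠ r) (hps : p ≠ s)
    (hqr : q ≠ r) (hqs : q ≠ s) (hrs : r ≠ s) : det4 p q r s ≠ 0 := by
  classical
  intro h0
  have hT : ({p, q, r, s} : Finset (Fin 3 → ℝ)) ⊆ S := by
    intro x hx
    simp only [Finset.mem_insert, Finset.mem_singleton] at hx
    rcases hx with rfl | rfl | rfl | rfl <;> assumption
  have hcard : ({p, q, r, s} : Finset (Fin 3 → ℝ)).card = 3 + 1 := by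
    rw [Finset.card_insert_of_notMem, Finset.card_insert_of_notMem, Finset.card_pair hrs] <;>
      simp [*]
  have hind := hgp _ hT hcard
  -- A linear dependence between the edge vectors from `p` is an affine one between the points.
  let e : Fin 4 ↪ ({p, q, r, s} : Finset (Fin 3 → ℝ)) :=
    ⟨![⟨p, by simp⟩, ⟨q, by simp⟩, ⟨r, by simp⟩, ⟨s, by simp⟩], by
      intro i j hij
      fin_cases i <;> fin_cases j <;> simp_all⟩
  have hind4 := hind.comp_embedding e
  have hdet : (Matrix.of ![q - p, r - p, s - p]).det = 0 := by
    rw [← h0, Matrix.det_fin_three]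
    simp [det4]
    ring
  obtain ⟨v, hv0, hv⟩ := Matrix.exists_vecMul_eq_zero_iff.2 hdet
  rw [affineIndependent_iff] at hind4
  have hw := hind4 Finset.univ ![-(v 0 + v 1 + v 2), v 0, v 1, v 2]
    (by simp [Fin.sum_univ_four]; ring) (by
      ext i
      have hi := congrFun hv i
      simp only [Matrix.vecMul, dotProduct, Fin.sum_univ_three] at hi
      have e0 : (e 0 : Fin 3 → ℝ) = p := rfl
      have e1 : (e 1 : Fin 3 → ℝ) = q := rfl
      have e2 : (e 2 : Fin 3 → ℝ) = r := rfl
      have e3 : (e 3 : Fin 3 → ℝ) = s := rfl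
      simp [Fin.sum_univ_four, e0, e1, e2, e3] at hi ⊢
      linarith)
  apply hv0
  ext i
  fin_cases i
  · simpa using hw 1 (by simp)
  · simpa using hw 2 (by simp)
  · simpa using hw 3 (by simp)

open Polynomial in
/-- A parameter `t` for which the functional with coefficients `1, t, t ^ 2` vanishes on none of
finitely many nonzero vectors. -/
theorem exists_generic (F : Finset (ℝ × ℝ × ℝ)) (hF : ∀ v ∈ F, v ≠ 0) :
    ∃ t : ℝ, ∀ v ∈ F, v.1 + t * v.2.1 + t ^ 2 * v.2.2 ≠ 0 := by
  have hfin : {t : ℝ | ∃ v ∈ F, v.1 + t * v.2.1 + t ^ 2 * v.2.2 = 0}.Finite := by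
    have : {t : ℝ | ∃ v ∈ F, v.1 + t * v.2.1 + t ^ 2 * v.2.2 = 0} =
        ⋃ v ∈ F, {t : ℝ | v.1 + t * v.2.1 + t ^ 2 * v.2.2 = 0} := by
      ext t
      simp
    rw [this]
    refine F.finite_toSet.biUnion fun v hv => ?_
    have hP : (C v.1 + C v.2.1 * X + C v.2.2 * X ^ 2 : ℝ[X]) ≠ 0 := by
      intro h
      apply hF v hv
      have h0 := congrArg (coeff · 0) h
      have h1 := congrArg (coeff · 1) h
      have h2 := congrArg (coeff · 2) h
      simp [coeff_X, coeff_C] at h0 h1 h2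
      ext <;> simp [h0, h1, h2]
    refine (Polynomial.finite_setOfPred_isRoot hP).subset fun t ht => ?_
    simp only [Set.mem_ofPred_eq, IsRoot, eval_add, eval_mul, eval_C, eval_X, eval_pow] at ht ⊢
    linarith
  obtain ⟨t, ht⟩ := hfin.infinite_compl.nonempty
  exact ⟨t, fun v hv h => ht ⟨v, hv, h⟩⟩

/-- The functional `v ↦ v 0 + t * v 1 + t ^ 2 * v 2`. -/
def curveForm (t : ℝ) (v : Fin 3 → ℝ) : ℝ := v 0 + t * v 1 + t ^ 2 * v 2

/-- Seen from `p` in the projective chart `curveForm t = 1`, the determinant of `p, x, y, z` is, up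
to the scaling factors, the signed area of the triangle of the three images. -/
theorem det4_eq_slopes (t : ℝ) {p x y z : Fin 3 → ℝ} (hx : curveForm t (x - p) ≠ 0)
    (hy : curveForm t (y - p) ≠ 0) (hz : curveForm t (z - p) ≠ 0) :
    det4 p x y z = curveForm t (x - p) * curveForm t (y - p) * curveForm t (z - p) *
      (((y 1 - p 1) / curveForm t (y - p) - (x 1 - p 1) / curveForm t (x - p)) *
          ((z 2 - p 2) / curveForm t (z - p) - (x 2 - p 2) / curveForm t (x - p)) -
        ((z 1 - p 1) / curveForm t (z - p) - (x 1 - p 1) / curveForm t (x - p)) *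
          ((y 2 - p 2) / curveForm t (y - p) - (x 2 - p 2) / curveForm t (x - p))) := by
  have e : ∀ w : Fin 3 → ℝ, w 0 - p 0 =
      curveForm t (w - p) - t * (w 1 - p 1) - t ^ 2 * (w 2 - p 2) := fun w => by
    simp only [curveForm, Pi.sub_apply]
    ring
  rw [det4, e x, e y, e z]
  generalize curveForm t (x - p) = X at *
  generalize curveForm t (y - p) = Y at *
  generalize curveForm t (z - p) = Z at *
  field_simp
  ring

/-- There is an edge `p₀ p₁` of the convex hull, and the other points are ordered around it by a
real-valued `key`. The point `p₀` minimizes a generic linear functional; in the projection from `p₀`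
to a plane, with coordinates `m` and `k`, the point `p₁` minimizes a generic functional `g`; and
`key` is the slope of the line from the image of `p₁`. -/
theorem exists_hull_edge {S : Finset (Fin 3 → ℝ)} (hcard : S.card = 9)
    (hgp : InGeneralPosition 3 S) : ∃ p₀ ∈ S, ∃ p₁ ∈ S, p₀ ≠ p₁ ∧ ∃ key : (Fin 3 → ℝ) → ℝ,
      ∀ x ∈ S, ∀ y ∈ S, x ≠ p₀ → x ≠ p₁ → y ≠ p₀ → y ≠ p₁ →
        (key x < key y → 0 < det4 p₀ p₁ x y) ∧ (key x = key y → det4 p₀ p₁ x y = 0) := by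
  classical
  obtain ⟨t, ht⟩ := exists_generic
    (S.offDiag.image fun z => (z.1 0 - z.2 0, z.1 1 - z.2 1, z.1 2 - z.2 2)) (by
      simp only [Finset.mem_image, Finset.mem_offDiag]
      rintro _ ⟨⟨x, y⟩, ⟨-, -, hxy⟩, rfl⟩ h
      simp only [Prod.mk_eq_zero] at h
      apply hxy
      ext i
      fin_cases i
      · exact sub_eq_zero.1 h.1
      · exact sub_eq_zero.1 h.2.1
      · exact sub_eq_zero.1 h.2.2)
  have hne : S.Nonempty := Finset.card_pos.1 (by omega)
  obtain ⟨p₀, hp₀, hmin₀⟩ := S.exists_min_image (fun x => x 0 + t * x 1 + t ^ 2 * x 2) hne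
  obtain ⟨X, hX⟩ : ∃ X : (Fin 3 → ℝ) → ℝ, X = fun x => curveForm t (x - p₀) := ⟨_, rfl⟩
  have Xpos : ∀ x ∈ S, x ≠ p₀ → 0 < X x := by
    intro x hx hxp
    have h1 := hmin₀ x hx
    have h2 := ht _ (Finset.mem_image.2 ⟨(x, p₀), Finset.mem_offDiag.2 ⟨hx, hp₀, hxp⟩, rfl⟩)
    simp only [hX, curveForm, Pi.sub_apply]
    refine lt_of_le_of_ne ?_ (Ne.symm h2)
    linarith
  obtain ⟨m, hm⟩ : ∃ m : (Fin 3 → ℝ) → ℝ, m = fun x => (x 1 - p₀ 1) / X x := ⟨_, rfl⟩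
  obtain ⟨k, hk⟩ : ∃ k : (Fin 3 → ℝ) → ℝ, k = fun x => (x 2 - p₀ 2) / X x := ⟨_, rfl⟩
  have hdet : ∀ x ∈ S, ∀ y ∈ S, ∀ z ∈ S, x ≠ p₀ → y ≠ p₀ → z ≠ p₀ →
      det4 p₀ x y z = X x * X y * X z *
        ((m y - m x) * (k z - k x) - (m z - m x) * (k y - k x)) :=
    fun x hx y hy z hz hxp hyp hzp => by
      have := Xpos x hx hxp
      have := Xpos y hy hyp
      have := Xpos z hz hzp
      subst hm hk hX
      apply det4_eq_slopes t <;> exact ne_of_gt ‹_›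
  -- Two points with the same slopes from `p₀` would be collinear with it.
  have hmk : ∀ x ∈ S.erase p₀, ∀ y ∈ S.erase p₀, x ≠ y → m x = m y → k x = k y → False := by
    intro x hx y hy hxy h1 h2
    obtain ⟨hxp, hxS⟩ := Finset.mem_erase.1 hx
    obtain ⟨hyp, hyS⟩ := Finset.mem_erase.1 hy
    obtain ⟨z, hz⟩ : (S \ {p₀, x, y}).Nonempty := by
      rw [← Finset.card_pos]
      have := Finset.le_card_sdiff {p₀, x, y} S
      have := Finset.card_le_three (a := p₀) (b := x) (c := y)
      omega
    simp only [Finset.mem_sdiff, Finset.mem_insert, Finset.mem_singleton, not_or] at hz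
    obtain ⟨hzS, hzp, hzx, hzy⟩ := hz
    refine det4_ne_zero hgp hp₀ hxS hyS hzS (Ne.symm hxp) (Ne.symm hyp) (Ne.symm hzp) hxy
      (Ne.symm hzx) (Ne.symm hzy) ?_
    rw [hdet x hxS y hyS z hzS hxp hyp hzp, h1, h2]
    ring
  obtain ⟨s, hs⟩ := exists_generic
    ((S.erase p₀).offDiag.image fun z => (m z.1 - m z.2, k z.1 - k z.2, 0)) (by
      simp only [Finset.mem_image, Finset.mem_offDiag]
      rintro _ ⟨⟨x, y⟩, ⟨hx, hy, hxy⟩, rfl⟩ h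
      simp only [Prod.mk_eq_zero] at h
      exact hmk x hx y hy hxy (sub_eq_zero.1 h.1) (sub_eq_zero.1 h.2.1))
  obtain ⟨g, hg⟩ : ∃ g : (Fin 3 → ℝ) → ℝ, g = fun x => m x + s * k x := ⟨_, rfl⟩
  obtain ⟨p₁, hp₁, hmin₁⟩ := (S.erase p₀).exists_min_image g (by
    rw [← Finset.card_pos, Finset.card_erase_of_mem hp₀]
    omega)
  obtain ⟨hp₁₀, hp₁S⟩ := Finset.mem_erase.1 hp₁
  have gpos : ∀ x ∈ S, x ≠ p₀ → x ≠ p₁ → 0 < g x - g p₁ := by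
    intro x hx hx0 hx1
    have hx' := Finset.mem_erase.2 ⟨hx0, hx⟩
    have h1 := hmin₁ x hx'
    have h2 := hs _ (Finset.mem_image.2 ⟨(x, p₁), Finset.mem_offDiag.2 ⟨hx', hp₁, hx1⟩, rfl⟩)
    refine lt_of_le_of_ne (by linarith) fun h => h2 ?_
    simp only [hg] at h
    linarith
  refine ⟨p₀, hp₀, p₁, hp₁S, Ne.symm hp₁₀, fun x => (k x - k p₁) / (g x - g p₁), ?_⟩
  intro x hx y hy hx0 hx1 hy0 hy1
  have gx := gpos x hx hx0 hx1
  have gy := gpos y hy hy0 hy1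
  rw [hdet p₁ hp₁S x hx y hy hp₁₀ hx0 hy0, div_lt_div_iff₀ gx gy, div_eq_div_iff gx.ne' gy.ne']
  have := Xpos p₁ hp₁S hp₁₀
  have := Xpos x hx hx0
  have := Xpos y hy hy0
  simp only [hg]
  refine ⟨fun h => mul_pos (by positivity) (by linarith), fun h => ?_⟩
  rw [mul_eq_zero]
  right
  linarith

theorem exists_labelling {S : Finset (Fin 3 → ℝ)} (hcard : S.card = 9)
    (hgp : InGeneralPosition 3 S) : ∃ pt : ℕ → Fin 3 → ℝ, (∀ i < 9, pt i ∈ S) ∧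
      (∀ i < 9, ∀ j < 9, pt i = pt j → i = j) ∧ (∀ x ∈ S, ∃ i < 9, pt i = x) ∧
      ∀ i j, 2 ≤ i → i < j → j < 9 → 0 < det4 (pt 0) (pt 1) (pt i) (pt j) := by
  classical
  obtain ⟨p₀, hp₀, p₁, hp₁, h01, key, hkey⟩ := exists_hull_edge hcard hgp
  set R := (S.erase p₀).erase p₁ with hR
  have hmemR : ∀ x, x ∈ R ↔ x ≠ p₁ ∧ x ≠ p₀ ∧ x ∈ S := by simp [hR]
  have hRcard : R.card = 7 := by
    rw [hR, Finset.card_erase_of_mem (Finset.mem_erase.2 ⟨Ne.symm h01, hp₁⟩),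
      Finset.card_erase_of_mem hp₀, hcard]
  set L := R.toList.insertionSort (fun x y => key x ≤ key y) with hL
  have hperm : L.Perm R.toList := List.perm_insertionSort _ _
  have hLmem : ∀ x, x ∈ L ↔ x ∈ R := fun x => by rw [hperm.mem_iff, Finset.mem_toList]
  have hLlen : L.length = 7 := by rw [hperm.length_eq, Finset.length_toList, hRcard]
  have hLnd : L.Nodup := hperm.nodup_iff.2 R.nodup_toList
  have hLsort : L.Pairwise (fun x y => key x ≤ key y) := by
    have : Std.Total (fun x y : Fin 3 → ℝ => key x ≤ key y) := ⟨fun x y => le_total _ _⟩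
    have : IsTrans (Fin 3 → ℝ) (fun x y => key x ≤ key y) := ⟨fun x y z => le_trans⟩
    exact List.pairwise_insertionSort _ _
  set M := p₀ :: p₁ :: L with hM
  have hMlen : M.length = 9 := by simp [hM, hLlen]
  have hMnd : M.Nodup := by
    simp only [hM, List.nodup_cons, List.mem_cons, hLmem, hmemR]
    tauto
  have hMmem : ∀ x, x ∈ M ↔ x ∈ S := by
    intro x
    simp only [hM, List.mem_cons, hLmem, hmemR]
    constructor
    · rintro (rfl | rfl | h)
      exacts [hp₀, hp₁, h.2.2]
    · tauto
  have hget : ∀ i, (hi : i < 9) → M.getD i 0 = M[i]'(by omega) := fun i hi =>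
    (List.getElem_eq_getD _).symm
  refine ⟨fun i => M.getD i 0, fun i hi => ?_, fun i hi j hj hij => ?_, fun x hx => ?_,
    fun i j hi hij hj => ?_⟩
  · change M.getD i 0 ∈ S
    rw [hget i hi, ← hMmem]
    exact List.getElem_mem _
  · simp only [hget i hi, hget j hj] at hij
    exact (hMnd.getElem_inj_iff).1 hij
  · obtain ⟨i, hi, rfl⟩ := List.getElem_of_mem ((hMmem x).2 hx)
    exact ⟨i, by omega, hget i (by omega)⟩
  · obtain ⟨i, rfl⟩ := Nat.exists_eq_add_of_le' hi
    obtain ⟨j, rfl⟩ := Nat.exists_eq_add_of_le' (by omega : 2 ≤ j)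
    have hi' : i < L.length := by omega
    have hj' : j < L.length := by omega
    have ei : M.getD (i + 2) 0 = L[i] := by rw [hget _ (by omega)]; simp [hM]
    have ej : M.getD (j + 2) 0 = L[j] := by rw [hget _ (by omega)]; simp [hM]
    simp only [ei, ej]
    change 0 < det4 p₀ p₁ L[i] L[j]
    have hxR := (hmemR _).1 ((hLmem _).1 (List.getElem_mem hi'))
    have hyR := (hmemR _).1 ((hLmem _).1 (List.getElem_mem hj'))
    have hxy : L[i] ≠ L[j] := fun h => by
      have := (hLnd.getElem_inj_iff).1 h
      omega
    have hle : key L[i] ≤ key L[j] := List.pairwise_iff_getElem.1 hLsort i j hi' hj' (by omega)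
    obtain ⟨hpos, hzero⟩ := hkey _ hxR.2.2 _ hyR.2.2 hxR.2.1 hxR.1 hyR.2.1 hyR.1
    refine hpos (lt_of_le_of_ne hle fun heq => ?_)
    exact det4_ne_zero hgp hp₀ hp₁ hxR.2.2 hyR.2.2 h01 (Ne.symm hxR.2.1) (Ne.symm hyR.2.1)
      (Ne.symm hxR.1) (Ne.symm hyR.1) hxy (hzero heq)

/-- The theorem of Carathéodory in `ℝ³`, with the vertices of the simplex padded to exactly four
members of the given list. -/
theorem exists_four {pt : ℕ → Fin 3 → ℝ} {L : List ℕ} (hL : L.Nodup) (h4 : 4 ≤ L.length)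
    (hinj : ∀ i ∈ L, ∀ j ∈ L, pt i = pt j → i = j) {x : Fin 3 → ℝ}
    (hx : x ∈ convexHull ℝ (Set.image pt {i | i ∈ L})) :
    ∃ l : List ℕ, l.Sublist L ∧ l.length = 4 ∧ x ∈ convexHull ℝ (Set.image pt {i | i ∈ l}) := by
  classical
  rw [convexHull_eq_union] at hx
  simp only [Set.mem_iUnion] at hx
  obtain ⟨t, hts, hind, hxt⟩ := hx
  have ht4 : t.card ≤ 4 := by
    have := hind.card_le_finrank_succ
    rw [Fintype.card_coe] at this
    have h3 := (vectorSpan ℝ (Set.range ((↑) : t → Fin 3 → ℝ))).finrank_le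
    simp at h3
    omega
  have hU4 : (L.toFinset.filter fun i => pt i ∈ t).card ≤ 4 := by
    refine le_trans ?_ ht4
    refine Finset.card_le_card_of_injOn pt (fun i hi => (Finset.mem_filter.1 hi).2) ?_
    intro i hi j hj hij
    simp only [Finset.coe_filter, List.mem_toFinset, Set.mem_ofPred_eq] at hi hj
    exact hinj i hi.1 j hj.1 hij
  obtain ⟨V, hUV, hVL, hV4⟩ := Finset.exists_subsuperset_card_eq
    (Finset.filter_subset (fun i => pt i ∈ t) L.toFinset) hU4
    (by rwa [List.toFinset_card_of_nodup hL])
  have hfin : (L.filter (· ∈ V)).toFinset = V := by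
    ext i
    simp only [List.mem_toFinset, List.mem_filter, decide_eq_true_eq]
    exact ⟨fun h => h.2, fun h => ⟨List.mem_toFinset.1 (hVL h), h⟩⟩
  refine ⟨L.filter (· ∈ V), List.filter_sublist, ?_, convexHull_mono ?_ hxt⟩
  · rw [← List.toFinset_card_of_nodup (hL.filter _), hfin, hV4]
  · intro y hy
    obtain ⟨i, hi, rfl⟩ := hts hy
    refine ⟨i, ?_, rfl⟩
    rw [Set.mem_ofPred_eq, ← List.mem_toFinset, hfin]
    exact hUV (Finset.mem_filter.2 ⟨List.mem_toFinset.2 hi, hy⟩)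

/-- Six labelled points are not a 6-hole: either one of them is in the hull of the others, or
another point is in their hull. In both cases four of them form a tetrahedron that contains a
labelled point other than its vertices. -/
theorem noHole_of_labelling {S : Finset (Fin 3 → ℝ)} {pt : ℕ → Fin 3 → ℝ}
    (hmem : ∀ i < 9, pt i ∈ S) (hinj : ∀ i < 9, ∀ j < 9, pt i = pt j → i = j)
    (hsurj : ∀ x ∈ S, ∃ i < 9, pt i = x) (hno : ¬ ∃ X : Finset (Fin 3 → ℝ), IsHole 3 6 S X)
    (m : ℕ) (hm : (members m).length = 6) :
    ∃ l ∈ (members m).sublistsLen 4, ∃ p < 9, p ∉ l ∧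
      pt p ∈ convexHull ℝ (Set.image pt {i | i ∈ l}) := by
  classical
  have hnd : (members m).Nodup := List.nodup_range.filter _
  have hlt : ∀ i ∈ members m, i < 9 := fun i hi => List.mem_range.1 (List.mem_of_mem_filter hi)
  set X : Finset (Fin 3 → ℝ) := (members m).toFinset.image pt with hX
  have hXS : X ⊆ S := by
    intro x hx
    obtain ⟨i, hi, rfl⟩ := Finset.mem_image.1 hx
    exact hmem i (hlt i (List.mem_toFinset.1 hi))
  have hXcard : X.card = 6 := by
    rw [hX, Finset.card_image_of_injOn, List.toFinset_card_of_nodup hnd, hm]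
    intro i hi j hj hij
    exact hinj i (hlt i (by simpa using hi)) j (hlt j (by simpa using hj)) hij
  -- In either case a point lies in the hull of the members other than itself.
  obtain ⟨p, hp9, hp⟩ : ∃ p < 9,
      pt p ∈ convexHull ℝ (Set.image pt {i | i ∈ (members m).erase p}) := by
    by_cases hconv : InConvexPosition 3 X
    · have : ∃ x ∈ S, x ∉ X ∧ x ∈ convexHull ℝ (X : Set (Fin 3 → ℝ)) := by
        by_contra hcon
        push Not at hcon
        exact hno ⟨X, hXS, hXcard, hconv, hcon⟩
      obtain ⟨x, hxS, hxX, hx⟩ := this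
      obtain ⟨p, hp9, rfl⟩ := hsurj x hxS
      have hpm : p ∉ members m := fun h =>
        hxX (Finset.mem_image_of_mem pt (List.mem_toFinset.2 h))
      refine ⟨p, hp9, convexHull_mono ?_ hx⟩
      intro y hy
      obtain ⟨i, hi, rfl⟩ := Finset.mem_image.1 (Finset.mem_coe.1 hy)
      refine ⟨i, ?_, rfl⟩
      rw [List.erase_of_not_mem hpm]
      exact List.mem_toFinset.1 hi
    · simp only [InConvexPosition, not_forall, not_not] at hconv
      obtain ⟨x, hxX, hx⟩ := hconv
      obtain ⟨p, hpm, rfl⟩ := Finset.mem_image.1 hxX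
      refine ⟨p, hlt p (List.mem_toFinset.1 hpm), convexHull_mono ?_ hx⟩
      intro y hy
      obtain ⟨hne, hy⟩ := Finset.mem_erase.1 (Finset.mem_coe.1 hy)
      obtain ⟨i, hi, rfl⟩ := Finset.mem_image.1 hy
      exact ⟨i, (List.mem_erase_of_ne fun h => hne (congrArg pt h)).2 (List.mem_toFinset.1 hi),
        rfl⟩
  have hsub : ((members m).erase p).Sublist (members m) := List.erase_sublist
  obtain ⟨l, hl, hl4, hpl⟩ := exists_four (hnd.sublist hsub)
    (by
      have := List.le_length_erase (a := p) (l := members m)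
      omega)
    (fun i hi j hj => hinj i (hlt i (hsub.subset hi)) j (hlt j (hsub.subset hj))) hp
  refine ⟨l, List.mem_sublistsLen.2 ⟨hl.trans hsub, hl4⟩, p, hp9, fun h => ?_, hpl⟩
  exact hnd.not_mem_erase (hl.subset h)

theorem exists_normalized {S : Finset (Fin 3 → ℝ)} (hcard : S.card = 9)
    (hgp : InGeneralPosition 3 S) (hno : ¬ ∃ X : Finset (Fin 3 → ℝ), IsHole 3 6 S X) :
    ∃ (pt : ℕ → Fin 3 → ℝ) (ε : ℝ), Normalized pt ε := by
  obtain ⟨pt, hmem, hinj, hsurj, hedge⟩ := exists_labelling hcard hgp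
  have hne {pt : ℕ → Fin 3 → ℝ} (hmem : ∀ i < 9, pt i ∈ S)
      (hinj : ∀ i < 9, ∀ j < 9, pt i = pt j → i = j) :
      ∀ a < 9, ∀ b < 9, ∀ c < 9, ∀ d < 9, a ≠ b → a ≠ c → a ≠ d → b ≠ c → b ≠ d → c ≠ d →
        det4 (pt a) (pt b) (pt c) (pt d) ≠ 0 := by
    intro a ha b hb c hc d hd hab hac had hbc hbd hcd
    exact det4_ne_zero hgp (hmem a ha) (hmem b hb) (hmem c hc) (hmem d hd)
      (fun h => hab (hinj _ ha _ hb h)) (fun h => hac (hinj _ ha _ hc h))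
      (fun h => had (hinj _ ha _ hd h)) (fun h => hbc (hinj _ hb _ hc h))
      (fun h => hbd (hinj _ hb _ hd h)) (fun h => hcd (hinj _ hc _ hd h))
  rcases lt_or_gt_of_ne (hne hmem hinj 2 (by norm_num) 3 (by norm_num) 4 (by norm_num) 5
    (by norm_num) (by norm_num) (by norm_num) (by norm_num) (by norm_num) (by norm_num)
    (by norm_num)) with h | h
  -- With the labels `0` and `1` exchanged all signs are taken relative to `-1`.
  · have hsw9 : ∀ i < 9, Equiv.swap 0 1 i < 9 := by decide
    have hsw : ∀ i, 2 ≤ i → Equiv.swap 0 1 i = i := fun i hi =>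
      Equiv.swap_apply_of_ne_of_ne (by omega) (by omega)
    have hmem' : ∀ i < 9, pt (Equiv.swap 0 1 i) ∈ S := fun i hi => hmem _ (hsw9 i hi)
    have hinj' : ∀ i < 9, ∀ j < 9, pt (Equiv.swap 0 1 i) = pt (Equiv.swap 0 1 j) → i = j :=
      fun i hi j hj hij => (Equiv.swap 0 1).injective (hinj _ (hsw9 i hi) _ (hsw9 j hj) hij)
    have hsurj' : ∀ x ∈ S, ∃ i < 9, pt (Equiv.swap 0 1 i) = x := fun x hx => by
      obtain ⟨i, hi, rfl⟩ := hsurj x hx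
      exact ⟨Equiv.swap 0 1 i, hsw9 i hi, by rw [Equiv.swap_apply_self]⟩
    refine ⟨fun i => pt (Equiv.swap 0 1 i), -1, by norm_num, hne hmem' hinj', ?_, ?_,
      noHole_of_labelling hmem' hinj' hsurj' hno⟩
    · intro i j hi hij hj
      rw [hsw i hi, hsw j (by omega), Equiv.swap_apply_left, Equiv.swap_apply_right, det4_swap12]
      simpa using hedge i j hi hij hj
    · rw [hsw 2 (by norm_num), hsw 3 (by norm_num), hsw 4 (by norm_num), hsw 5 (by norm_num)]
      linarith
  · exact ⟨pt, 1, by norm_num, hne hmem hinj, by simpa using hedge, by simpa using h,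
      noHole_of_labelling hmem hinj hsurj hno⟩

/-- Every set of 9 points in ℝ³ in general position contains a 6-hole:
`h⁽³⁾(6) ≤ 9`. -/
theorem h3_6_le_9 (S : Finset (Fin 3 → ℝ)) (hcard : S.card = 9)
    (hgp : InGeneralPosition 3 S) :
    ∃ X : Finset (Fin 3 → ℝ), IsHole 3 6 S X := by
  by_contra hno
  obtain ⟨pt, ε, N⟩ := exists_normalized hcard hgp hno
  exact not_normalized N
end

section
/- (Grassmann–Plücker relations) For any vectors a₁,…,a_r, b₁,…,b_r ∈ ℝ^r (r ≥ 1), one has det(a₁,…,a_r) · det(b₁,…,b_r) = Σ_{i=1}^{r} det(b_i, a₂,…,a_r) · det(b₁,…,b_{i−1}, a₁, b_{i+1},…,b_r), where det(v₁,…,v_r) denotes the determinant of the r×r matrix with columns v₁,…,v_r. -/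
/-!
Let `A` and `B` be the matrices with columns `a` and `b`. Replacing the `i`-th column of a matrix
by `w` gives the `i`-th coordinate of `Matrix.cramer`, a linear map in `w`. Cramer's rule
`∑ i, cramer B a₁ i • b i = det B • a₁` therefore yields the relation on applying the linear
functional `w ↦ det (w, a₂, …, a_r)` to both sides.
-/

/-- The determinant of the `r × r` matrix whose columns are the vectors
`v 0, …, v (r-1)` in `ℝ^r`. -/
def colDet {r : ℕ} (v : Fin r → (Fin r → ℝ)) : ℝ :=
  Matrix.det (Matrix.of fun i j => v j i)

open Matrix in
lemma colDet_update {r : ℕ} (v : Fin r → (Fin r → ℝ)) (i : Fin r) (w : Fin r → ℝ) :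
    colDet (Function.update v i w) = cramer (of fun k j => v j k) w i := by
  rw [cramer_apply, colDet]
  congr 1
  ext k j
  by_cases h : j = i
  · subst h; simp
  · simp [h]

/-- The Graßmann–Plücker relations: for any vectors
`a₁, …, a_r, b₁, …, b_r ∈ ℝ^r` (with `r ≥ 1`),
`det(a₁,…,a_r) ⬝ det(b₁,…,b_r)
  = ∑_{i=1}^{r} det(b_i, a₂,…,a_r) ⬝ det(b₁,…,b_{i−1}, a₁, b_{i+1},…,b_r)`. -/
theorem grassmann_pluecker (r : ℕ) (hr : 0 < r) (a b : Fin r → (Fin r → ℝ)) :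
    colDet a * colDet b =
      ∑ i : Fin r,
        colDet (Function.update a ⟨0, hr⟩ (b i)) *
          colDet (Function.update b i (a ⟨0, hr⟩)) := by
  have cramer_rule : ∑ i, (Matrix.of fun k j => b j k).cramer (a ⟨0, hr⟩) i • b i =
      colDet b • a ⟨0, hr⟩ := by
    rw [colDet, ← Matrix.mulVec_cramer]
    ext k
    simp [Matrix.mulVec, dotProduct, mul_comm]
  have key := congrArg (fun w => (Matrix.of fun k j => a j k).cramer w ⟨0, hr⟩) cramer_rule
  simp only [map_sum, map_smul, Finset.sum_apply, Pi.smul_apply, smul_eq_mul] at key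
  simp only [← colDet_update, Function.update_eq_self] at key
  rw [mul_comm, ← key]
  exact Finset.sum_congr rfl fun i _ => mul_comm _ _
end

section
/- (Acyclicity of point chirotopes) Let p₁,…,p_{d+1}, p_{d+2} be points in ℝ^d such that det(p₁,…,p_{d+1}) > 0, where det is taken of homogeneous coordinates. Then it cannot hold that det(p₁,…,p_{i−1}, p_{d+2}, p_{i+1},…,p_{d+1}) < 0 for every i = 1,…,d+1. -/
/-!
Write `A` for the matrix with columns `(1, p j)` and `b = (1, q)`. By Cramer's rule the vector
of determinants `homDet (Function.update p i q)` solves `A x = det A • b`. The first row of this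
system, in which all entries of `A` and `b` are `1`, says that these determinants sum to
`homDet p > 0`, so they cannot all be negative.
-/

/-- For points `q 0, …, q d` in `ℝ^d`, the determinant of the `(d+1) × (d+1)`
matrix whose `j`-th column is the homogeneous coordinate vector
`(1, q j) ∈ ℝ^{d+1}`. -/
def homDet {d : ℕ} (q : Fin (d + 1) → (Fin d → ℝ)) : ℝ :=
  Matrix.det (Matrix.of fun i j => (Fin.cons (1 : ℝ) (q j) : Fin (d + 1) → ℝ) i)

/-- The first coordinate of Cramer's rule. -/
theorem sum_homDet_update (d : ℕ) (p : Fin (d + 1) → (Fin d → ℝ)) (q : Fin d → ℝ) :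
    ∑ i, homDet (Function.update p i q) = homDet p := by
  set A : Matrix (Fin (d + 1)) (Fin (d + 1)) ℝ :=
    Matrix.of fun i j => (Fin.cons (1 : ℝ) (p j) : Fin (d + 1) → ℝ) i with hA
  set b : Fin (d + 1) → ℝ := Fin.cons 1 q with hb
  have hcol : ∀ i, homDet (Function.update p i q) = A.cramer b i := by
    intro i
    rw [Matrix.cramer_apply, homDet]
    congr 1
    ext k j
    by_cases h : j = i
    · subst h
      simp [hb]
    · simp [hA, h]
  have h0 := congrFun (Matrix.mulVec_cramer A b) 0
  simp only [Matrix.mulVec, dotProduct, hA, hb, Matrix.of_apply, Fin.cons_zero, one_mul,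
    Pi.smul_apply, smul_eq_mul, mul_one] at h0
  rw [Finset.sum_congr rfl fun i _ => hcol i]
  exact h0

/-- Acyclicity of point chirotopes: if `p₁, …, p_{d+1}` are points in `ℝ^d` with
`det(p₁,…,p_{d+1}) > 0` (homogeneous coordinates), then for a further point
`p_{d+2}` it cannot hold that `det(p₁,…,p_{i−1}, p_{d+2}, p_{i+1},…,p_{d+1}) < 0`
for every `i = 1,…,d+1`. -/
theorem point_chirotope_acyclic (d : ℕ) (p : Fin (d + 1) → (Fin d → ℝ))
    (q : Fin d → ℝ) (hp : 0 < homDet p) :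
    ¬ ∀ i : Fin (d + 1), homDet (Function.update p i q) < 0 := by
  intro h
  rw [← sum_homDet_update d p q] at hp
  exact absurd hp (not_lt.mpr (Finset.sum_nonpos fun i _ => (h i).le))
end

section
/- (Triangulation through a fixed vertex) Let X be a finite set of at least d+1 points in ℝ^d in general position, let q ∈ X be a point at which the first coordinate is minimized over X, and let p be a point contained in the convex hull of X. Then there exist d points q₁,…,q_d ∈ X \ {q} such that p lies in the convex hull of {q, q₁,…,q_d}. -/
/-- Conic Carathéodory reduction with apex `q`, in a form that keeps the total weight at most `1`. -/
theorem exists_cone_reduction {d : ℕ} (q p : Fin d → ℝ) (T : Finset (Fin d → ℝ)) :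
    ∀ c : (Fin d → ℝ) → ℝ, (∀ x ∈ T, 0 ≤ c x) → ∑ x ∈ T, c x ≤ 1 →
      ∑ x ∈ T, c x • (x - q) = p - q →
      ∃ T' ⊆ T, T'.card ≤ d ∧ ∃ c' : (Fin d → ℝ) → ℝ, (∀ x ∈ T', 0 ≤ c' x) ∧
        ∑ x ∈ T', c' x ≤ 1 ∧ ∑ x ∈ T', c' x • (x - q) = p - q := by
  classical
  induction T using Finset.strongInduction with
  | H T ih =>
  intro c hc hsum hp
  by_cases hT : T.card ≤ d
  · exact ⟨T, subset_rfl, hT, c, hc, hsum, hp⟩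
  have hinj : Function.Injective (fun x : Fin d → ℝ => x - q) := sub_left_injective
  obtain ⟨a, ha, hs, hpos⟩ : ∃ a : (Fin d → ℝ) → ℝ, ∑ x ∈ T, a x • (x - q) = 0 ∧
      0 ≤ ∑ x ∈ T, a x ∧ ∃ x ∈ T, 0 < a x := by
    obtain ⟨f, hf, y, hy, hfy⟩ := Module.exists_nontrivial_relation_of_finrank_lt_card
      (R := ℝ) (t := T.image (fun x => x - q)) (by
        rw [Finset.card_image_of_injective _ hinj, Module.finrank_fin_fun]; omega)
    rw [Finset.sum_image hinj.injOn] at hf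
    obtain ⟨x, hx, rfl⟩ := Finset.mem_image.1 hy
    -- A nonzero real family with nonnegative sum has a positive entry.
    have key : ∀ b : (Fin d → ℝ) → ℝ, b x ≠ 0 → 0 ≤ ∑ z ∈ T, b z → ∃ z ∈ T, 0 < b z := by
      intro b hb hbs
      by_contra! hneg
      have h0 := (Finset.sum_eq_zero_iff_of_nonpos hneg).1
        (le_antisymm (Finset.sum_nonpos hneg) hbs)
      exact hb (h0 x hx)
    rcases le_total 0 (∑ z ∈ T, f (z - q)) with h | h
    · exact ⟨fun z => f (z - q), hf, h, key _ hfy h⟩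
    · have h' : 0 ≤ ∑ z ∈ T, -f (z - q) := by
        rw [Finset.sum_neg_distrib]; linarith
      exact ⟨fun z => -f (z - q), by simp [hf], h', key _ (neg_ne_zero.2 hfy) h'⟩
  -- The point `y` minimizing `c / a` over the positive entries of `a` is the one to be removed.
  obtain ⟨y, hy, hymin⟩ := Finset.exists_min_image (T.filter fun x => 0 < a x)
    (fun x => c x / a x) (by obtain ⟨x, hx, h⟩ := hpos; exact ⟨x, by simp [hx, h]⟩)
  obtain ⟨hyT, hay⟩ := Finset.mem_filter.1 hy
  set t := c y / a y with ht
  have ht0 : 0 ≤ t := div_nonneg (hc y hyT) hay.le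
  have hzero : c y - t * a y = 0 := by rw [ht]; field_simp; ring
  obtain ⟨T', hT', h⟩ := ih (T.erase y) (Finset.erase_ssubset hyT) (fun x => c x - t * a x)
    (by
      intro x hx
      have hxT := Finset.mem_of_mem_erase hx
      rcases lt_or_ge 0 (a x) with h | h
      · have := hymin x (Finset.mem_filter.2 ⟨hxT, h⟩)
        rw [le_div_iff₀ h] at this
        linarith
      · nlinarith [hc x hxT])
    (by
      rw [Finset.sum_erase T (f := fun x => c x - t * a x) hzero, Finset.sum_sub_distrib, ← Finset.mul_sum]
      nlinarith)
    (by
      rw [Finset.sum_erase T (f := fun x => (c x - t * a x) • (x - q))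
        (by simp only [hzero, zero_smul])]
      simp only [sub_smul, mul_smul, Finset.sum_sub_distrib, ← Finset.smul_sum]
      rw [ha, hp, smul_zero, sub_zero])
  exact ⟨T', hT'.trans (Finset.erase_subset _ _), h⟩

/-- Triangulation through a fixed vertex: let `X` be a finite set of at least
`d+1` points in `ℝ^d` in general position, let `q ∈ X` be a point minimizing the
first coordinate over `X`, and let `p` be a point in the convex hull of `X`.
Then there are `d` points `q₁, …, q_d ∈ X \ {q}` such that `p` lies in the convex
hull of `{q, q₁, …, q_d}`. -/
theorem triangulation_through_leftmost (d : ℕ) (hd : 0 < d)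
    (X : Finset (Fin d → ℝ)) (hX : d + 1 ≤ X.card)
    (hgp : InGeneralPosition d X) (q : Fin d → ℝ) (hq : q ∈ X)
    (hmin : ∀ x ∈ X, q ⟨0, hd⟩ ≤ x ⟨0, hd⟩)
    (p : Fin d → ℝ) (hp : p ∈ convexHull ℝ (↑X : Set (Fin d → ℝ))) :
    ∃ T ⊆ X.erase q, T.card = d ∧
      p ∈ convexHull ℝ (insert q ↑T : Set (Fin d → ℝ)) := by
  classical
  obtain ⟨w, hw, hw1, hwp⟩ := Finset.mem_convexHull'.1 hp
  have hrel : ∑ x ∈ X.erase q, w x • (x - q) = p - q := by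
    rw [Finset.sum_erase _ (by simp)]
    simp only [smul_sub, Finset.sum_sub_distrib, ← Finset.sum_smul, hw1, hwp, one_smul]
  obtain ⟨T', hT', hcard, c, hc, hc1, hcp⟩ := exists_cone_reduction q p (X.erase q) w
    (fun x hx => hw x (Finset.mem_of_mem_erase hx))
    (hw1 ▸ Finset.sum_le_sum_of_subset_of_nonneg (Finset.erase_subset _ _)
      (fun x hx _ => hw x hx)) hrel
  obtain ⟨T, hT'T, hTX, hTd⟩ := Finset.exists_subsuperset_card_eq hT' hcard
    (by rw [Finset.card_erase_of_mem hq]; omega)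
  refine ⟨T, hTX, hTd, ?_⟩
  have hqT' : q ∉ T' := fun h => Finset.notMem_erase q X (hT' h)
  have hmem : p ∈ convexHull ℝ (↑(insert q T') : Set (Fin d → ℝ)) := by
    -- The weight left over by `c` is assigned to `q`.
    have hne : ∀ x ∈ T', x ≠ q := fun x hx h => hqT' (h ▸ hx)
    have hs : ∑ x ∈ T', (if x = q then 1 - ∑ z ∈ T', c z else c x) = ∑ x ∈ T', c x :=
      Finset.sum_congr rfl fun x hx => if_neg (hne x hx)
    have hs' : ∑ x ∈ T', (if x = q then 1 - ∑ z ∈ T', c z else c x) • x = ∑ x ∈ T', c x • x :=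
      Finset.sum_congr rfl fun x hx => by rw [if_neg (hne x hx)]
    refine Finset.mem_convexHull'.2 ⟨fun x => if x = q then 1 - ∑ z ∈ T', c z else c x, ?_, ?_, ?_⟩
    · intro x hx
      dsimp only
      split_ifs with h
      · linarith
      · exact hc x ((Finset.mem_insert.1 hx).resolve_left h)
    · rw [Finset.sum_insert hqT', hs, if_pos rfl]; ring
    · rw [Finset.sum_insert hqT', hs']; dsimp only; rw [if_pos rfl]
      simp only [smul_sub, Finset.sum_sub_distrib, ← Finset.sum_smul] at hcp
      rw [sub_smul, one_smul]
      linear_combination (exp := 1) hcp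
  refine convexHull_mono ?_ hmem
  rw [Finset.coe_insert]
  exact Set.insert_subset_insert (by exact_mod_cast hT'T)
end
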